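/- Let F be a field of characteristic 2, K = F(√a₁,…,√aₙ) with a₁,…,aₙ ∈ F*, and L = K(℘⁻¹(b)) for some b ∈ F, where ℘⁻¹(b) denotes a root of X² + X + b. Then W_q(L/F) = W(F) ⊗ [1,b] + Σ_{i=1}^n ⟨1,aᵢ⟩_b ⊗ W_q(F). -/

import Mathlib

/-!  A concrete coefficient-matrix model of (possibly singular) finite-dimensional
quadratic forms over a field, suitable for characteristic 2. -/

/-- Coefficient representation of a (finite-dimensional) quadratic form over a field `F`:
the form of dimension `dim` given by `q(x) = ∑ i j, c i j * x i * x j`. -/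
structure QF (F : Type*) [Field F] : Type _ where
  dim : ℕ
  c : Matrix (Fin dim) (Fin dim) F

namespace QF

variable {F E : Type*} [Field F] [Field E]

/-- Evaluation of the quadratic form at a vector. -/
def eval (q : QF F) (x : Fin q.dim → F) : F :=
  ∑ i, ∑ j, q.c i j * x i * x j

/-- Scalar extension (base change) of a quadratic form along a ring homomorphism. -/
def map (f : F →+* E) (q : QF F) : QF E :=
  ⟨q.dim, fun i j => f (q.c i j)⟩

/-- Orthogonal sum. -/
def orthSum (q q' : QF F) : QF F :=
  ⟨q.dim + q'.dim,
    Matrix.reindex finSumFinEquiv finSumFinEquiv (Matrix.fromBlocks q.c 0 0 q'.c)⟩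

/-- Scaling `a • q`. -/
def smul (a : F) (q : QF F) : QF F := ⟨q.dim, a • q.c⟩

/-- The nonsingular binary quadratic form `[a,b] : (x,y) ↦ ax² + xy + by²`. -/
def bin (a b : F) : QF F := ⟨2, !![a, 1; 0, b]⟩

/-- The diagonal (totally singular) quadratic form `⟨a₁, …, aₙ⟩`. -/
def diag {n : ℕ} (v : Fin n → F) : QF F := ⟨n, Matrix.diagonal v⟩

/-- The zero-dimensional quadratic form. -/
def nil : QF F := { dim := 0, c := 0 }

/-- The one-dimensional form `⟨1⟩`. -/
def unit : QF F := diag (fun _ : Fin 1 => (1 : F))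

/-- Orthogonal sum of a list of forms. -/
def sumList (l : List (QF F)) : QF F := l.foldr orthSum nil

/-- `pfTensor [a₁,…,aₙ] q` is the tensor product `⟨⟨a₁,…,aₙ⟩⟩_b ⊗ q` of the bilinear
Pfister form `⟨⟨a₁,…,aₙ⟩⟩_b = ⟨1,a₁⟩_b ⊗ ⋯ ⊗ ⟨1,aₙ⟩_b` with the quadratic form `q`,
via `⟨1,a⟩_b ⊗ q ≅ q ⊥ a·q`. -/
def pfTensor (l : List F) (q : QF F) : QF F :=
  l.foldr (fun a r => orthSum r (smul a r)) q

/-- The hyperbolic plane `ℍ ≅ [0,0]`. -/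
def hypPlane : QF F := bin 0 0

/-- The orthogonal sum of `k` hyperbolic planes. -/
def hyp (k : ℕ) : QF F := sumList (List.replicate k hypPlane)

/-- The `l`-dimensional zero form `⟨0,…,0⟩`. -/
def zeros (l : ℕ) : QF F := diag (fun _ : Fin l => (0 : F))

/-- Isometry of quadratic forms. -/
def Isometric (q q' : QF F) : Prop :=
  ∃ e : (Fin q.dim → F) ≃ₗ[F] (Fin q'.dim → F), ∀ x, q'.eval (e x) = q.eval x

/-- Anisotropy: the form has no nontrivial zero. -/
def Anisotropic (q : QF F) : Prop := ∀ x, q.eval x = 0 → x = 0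

/-- A quadratic form is nonsingular if the radical of its polar form
`B_q(x,y) = q(x+y) - q(x) - q(y)` (with matrix `c + cᵀ`) is trivial. -/
def Nonsingular (q : QF F) : Prop := ∀ x, (q.c + q.c.transpose).mulVec x = 0 → x = 0

/-- A quadratic form is totally singular if its polar form vanishes identically. -/
def TotallySingular (q : QF F) : Prop := q.c + q.c.transpose = 0

/-- A quadratic form is hyperbolic if it is isometric to an orthogonal sum of
hyperbolic planes. -/
def Hyperbolic (q : QF F) : Prop := ∃ k, Isometric q (hyp k)

/-- Witt equivalence: `q ~ q'` iff the anisotropic parts agree, equivalently the two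
forms become isometric after adding suitable numbers of hyperbolic planes and zero
forms. -/
def WittEquiv (q q' : QF F) : Prop :=
  ∃ k k' l l', Isometric (orthSum q (orthSum (hyp k) (zeros l)))
    (orthSum q' (orthSum (hyp k') (zeros l')))

/-- `AnisoPartOf φ q` : `φ` is (isometric to) the anisotropic part of `q`, i.e. `φ` is
anisotropic and `q ≅ k × ℍ ⊥ φ ⊥ ⟨0,…,0⟩`. -/
def AnisoPartOf (φ q : QF F) : Prop :=
  Anisotropic φ ∧ ∃ k l, Isometric q (orthSum (hyp k) (orthSum φ (zeros l)))

/-- `Dominates q' q` means `q ≺ q'`, i.e. `q'` dominates `q`: there is an injective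
linear map `t` of the underlying spaces with `q' ∘ t = q`. -/
def Dominates (q' q : QF F) : Prop :=
  ∃ t : (Fin q.dim → F) →ₗ[F] (Fin q'.dim → F), Function.Injective t ∧
    ∀ x, q'.eval (t x) = q.eval x

/-- The affine quadric polynomial `∑ cᵢⱼ XᵢXⱼ` of a quadratic form. -/
noncomputable def toPoly (q : QF F) : MvPolynomial (Fin q.dim) F :=
  ∑ i, ∑ j, MvPolynomial.C (q.c i j) * (MvPolynomial.X i * MvPolynomial.X j)

/-- The affine coordinate ring of the (reduced) quadric `q = 0`. -/
abbrev CoordRing (q : QF F) : Type _ :=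
  MvPolynomial (Fin q.dim) F ⧸ (Ideal.span {q.toPoly}).radical

/-- The function field of the quadric `q = 0` (assuming the quadric is integral). -/
abbrev FunctionField (q : QF F) [IsDomain (CoordRing q)] : Type _ :=
  FractionRing (CoordRing q)

/-- The canonical ring homomorphism from a base field `F` into the function field of a
quadric defined over an extension field `K` of `F`. -/
noncomputable def toFunctionField {K : Type*} [Field K] [Algebra F K] (q : QF K)
    [IsDomain (CoordRing q)] : F →+* FunctionField q :=
  (algebraMap (CoordRing q) (FunctionField q)).comp
    ((algebraMap K (CoordRing q)).comp (algebraMap F K))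

end QF

/-!
Squaring maps `K` into `F`, say `φ t = t ^ 2`. If `π` is a homomorphism from `W_q(F)` that kills
the right-hand side, then the values `π [c, d]` extend to a symbol on `F × K` in which a factor
`φ t` of the first slot may be moved into the second, exactly as for planes `[c, d]` over `K`.
A form of `W_q(F)` that vanishes over `L = K(℘⁻¹(b))` is a sum of planes acquiring a Lagrangian over
`L`; splitting off one plane at a time shows that its symbol is zero. Taking for `π` the quotient
map by the right-hand side gives the nontrivial inclusion.
-/

namespace QF

open Module

section Metabolic

variable {F V V' : Type*} [Field F] [AddCommGroup V] [Module F V] [AddCommGroup V'] [Module F V']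
  {Q : QuadraticForm F V} {Q' : QuadraticForm F V'}

/-- Associativity of the orthogonal sum of quadratic forms. -/
def prodAssocIsometryEquiv {V'' : Type*} [AddCommGroup V''] [Module F V''] (Q : QuadraticForm F V)
    (Q' : QuadraticForm F V') (Q'' : QuadraticForm F V'') :
    ((Q.prod Q').prod Q'').IsometryEquiv (Q.prod (Q'.prod Q'')) where
  __ := LinearEquiv.prodAssoc F V V' V''
  map_app' v := (add_assoc (Q v.1.1) (Q' v.1.2) (Q'' v.2)).symm

theorem injective_of_isometry (hQ : Q.polarBilin.SeparatingLeft) (g : Q →qᵢ Q') :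
    Function.Injective g := by
  refine (injective_iff_map_eq_zero g).2 fun v hv => hQ v fun w => ?_
  rw [QuadraticMap.polarBilin_apply_apply, QuadraticMap.polar, ← g.map_app, ← g.map_app v,
    ← g.map_app w, map_add, hv]
  simp

theorem separatingLeft_of_isometryEquiv (hQ : Q.polarBilin.SeparatingLeft)
    (e : Q.IsometryEquiv Q') : Q'.polarBilin.SeparatingLeft := by
  intro v hv
  refine e.symm.toLinearEquiv.map_eq_zero_iff.1 (hQ _ fun w => ?_)
  have h := hv (e w)
  rw [QuadraticMap.polarBilin_apply_apply, QuadraticMap.polar] at h ⊢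
  rw [← e.map_app (_ + w), ← e.map_app w, ← e.map_app (e.symm.toLinearEquiv v)]
  have hv' : e (e.symm.toLinearEquiv v) = v := e.apply_symm_apply v
  have hvw : e (e.symm.toLinearEquiv v + w) = v + e w :=
    (map_add e.toLinearEquiv _ _).trans (congrArg (· + e w) hv')
  rwa [hvw, hv']

theorem separatingLeft_prod (hQ : Q.polarBilin.SeparatingLeft)
    (hQ' : Q'.polarBilin.SeparatingLeft) : (Q.prod Q').polarBilin.SeparatingLeft := by
  rintro ⟨v, v'⟩ h
  refine Prod.ext (hQ v fun w => ?_) (hQ' v' fun w => ?_)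
  · simpa using h (w, 0)
  · simpa using h (0, w)

theorem separatingLeft_of_prod_right (h : (Q.prod Q').polarBilin.SeparatingLeft) :
    Q'.polarBilin.SeparatingLeft := fun v hv =>
  congrArg Prod.snd (h (0, v) fun w => by simpa using hv w.2)

theorem polar_eq_zero_of_mem {S : Submodule F V} (hS : ∀ v ∈ S, Q v = 0) {v w : V} (hv : v ∈ S)
    (hw : w ∈ S) : QuadraticMap.polar Q v w = 0 := by
  simp [QuadraticMap.polar, hS _ (S.add_mem hv hw), hS v hv, hS w hw]

/-- A quadratic form is metabolic if it vanishes identically on a subspace of at least half the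
dimension. For nonsingular forms this is hyperbolicity, but it is much easier to transport. In
infinite dimension `finrank` is zero and the notion is void. -/
def IsMetabolic (Q : QuadraticForm F V) : Prop :=
  ∃ S : Submodule F V, (∀ v ∈ S, Q v = 0) ∧ finrank F V ≤ 2 * finrank F S

theorem isMetabolic_of_injective {U : Type*} [AddCommGroup U] [Module F U] {g : U →ₗ[F] V}
    (hg : Function.Injective g) (hQ : ∀ u, Q (g u) = 0) (hd : finrank F V ≤ 2 * finrank F U) :
    IsMetabolic Q :=
  ⟨LinearMap.range g, by rintro _ ⟨u, rfl⟩; exact hQ u, by rwa [LinearMap.finrank_range_of_inj hg]⟩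

theorem isMetabolic_of_finrank_eq_zero (h : finrank F V = 0) (Q : QuadraticForm F V) :
    IsMetabolic Q :=
  ⟨⊥, by simp, by simp [h]⟩

namespace IsMetabolic

theorem of_injective_isometry (h : IsMetabolic Q) (g : Q →qᵢ Q') (hg : Function.Injective g)
    (hd : finrank F V' ≤ finrank F V) : IsMetabolic Q' := by
  obtain ⟨S, hS, hSd⟩ := h
  exact isMetabolic_of_injective (g := g.toLinearMap ∘ₗ S.subtype)
    (hg.comp S.injective_subtype) (fun v => (g.map_app v).trans (hS v v.2)) (hd.trans hSd)

theorem of_isometry (h : IsMetabolic Q) (hQ : Q.polarBilin.SeparatingLeft) (g : Q →qᵢ Q')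
    (hd : finrank F V' ≤ finrank F V) : IsMetabolic Q' :=
  h.of_injective_isometry g (injective_of_isometry hQ g) hd

theorem of_isometryEquiv (h : IsMetabolic Q) (e : Q.IsometryEquiv Q') : IsMetabolic Q' :=
  h.of_injective_isometry e.toIsometry e.injective e.toLinearEquiv.finrank_eq.ge

theorem congr (e : Q.IsometryEquiv Q') : IsMetabolic Q ↔ IsMetabolic Q' :=
  ⟨fun h => h.of_isometryEquiv e, fun h => h.of_isometryEquiv e.symm⟩

variable [FiniteDimensional F V] [FiniteDimensional F V']

theorem prod (h : IsMetabolic Q) (h' : IsMetabolic Q') : IsMetabolic (Q.prod Q') := by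
  obtain ⟨S, hS, hSd⟩ := h
  obtain ⟨T, hT, hTd⟩ := h'
  refine isMetabolic_of_injective (g := S.subtype.prodMap T.subtype)
    (S.injective_subtype.prodMap T.injective_subtype) (fun u => ?_) ?_
  · simp [hS _ u.1.2, hT _ u.2.2]
  · rw [finrank_prod, finrank_prod]
    omega

end IsMetabolic

theorem finrank_add_finrank_le_of_polar_eq_zero [FiniteDimensional F V]
    (hQ : Q.polarBilin.SeparatingLeft) {S T : Submodule F V}
    (h : ∀ v ∈ S, ∀ w ∈ T, QuadraticMap.polar Q v w = 0) :
    finrank F S + finrank F T ≤ finrank F V := by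
  have hker : LinearMap.ker Q.polarBilin = ⊥ := LinearMap.separatingLeft_iff_ker_eq_bot.1 hQ
  have hdim := LinearMap.BilinForm.finrank_add_finrank_orthogonal' (B := Q.polarBilin) S
  rw [hker, inf_bot_eq, finrank_bot, add_zero] at hdim
  have hle : T ≤ LinearMap.BilinForm.orthogonal Q.polarBilin S := fun w hw v hv => h v hv w hw
  have := Submodule.finrank_mono hle
  omega

theorem finrank_eq_map_fst_add_comap_inr [FiniteDimensional F V] [FiniteDimensional F V']
    (X : Submodule F (V × V')) :
    finrank F X = finrank F (X.map (LinearMap.fst F V V')) +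
      finrank F (X.comap (LinearMap.inr F V V')) := by
  have hker : (LinearMap.ker ((LinearMap.fst F V V').domRestrict X)).map X.subtype =
      (X.comap (LinearMap.inr F V V')).map (LinearMap.inr F V V') := by
    rw [LinearMap.ker_domRestrict, Submodule.map_comap_subtype, LinearMap.ker_fst,
      Submodule.map_comap_eq, inf_comm]
  rw [← LinearMap.finrank_range_add_finrank_ker ((LinearMap.fst F V V').domRestrict X),
    LinearMap.range_domRestrict, ← Submodule.finrank_map_subtype_eq X, hker,
    LinearEquiv.finrank_eq (Submodule.equivMapOfInjective (LinearMap.inr F V V')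
      LinearMap.inr_injective (X.comap (LinearMap.inr F V V')))]

/-- Witt cancellation. -/
theorem IsMetabolic.of_prod [FiniteDimensional F V] [FiniteDimensional F V']
    (hQ : Q.polarBilin.SeparatingLeft) (h : IsMetabolic Q)
    (hQQ' : IsMetabolic (Q.prod Q')) : IsMetabolic Q' := by
  obtain ⟨T, hT, hTd⟩ := h
  obtain ⟨S, hS, hSd⟩ := hQQ'
  let i := LinearMap.inl F V V'
  have hi (W : Submodule F V) : finrank F (W.map i) = finrank F W :=
    (Submodule.equivMapOfInjective i LinearMap.inl_injective W).finrank_eq.symm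
  let U : Submodule F V := T ⊓ S.comap i
  let X : Submodule F (V × V') := T.map i ⊔ S
  have orthogonal : finrank F (X.map (LinearMap.fst F V V')) + finrank F U ≤ finrank F V := by
    refine finrank_add_finrank_le_of_polar_eq_zero hQ ?_
    rintro _ ⟨_, hx, rfl⟩ u ⟨huT, huS⟩
    obtain ⟨_, ⟨t, ht, rfl⟩, s, hs, rfl⟩ := Submodule.mem_sup.1 hx
    have hsu : QuadraticMap.polar Q s.1 u = 0 := by simpa [i] using polar_eq_zero_of_mem hS hs huS
    simp [i, QuadraticMap.polar_add_left, hsu, polar_eq_zero_of_mem hT ht huT]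
  refine ⟨X.comap (LinearMap.inr F V V'), fun v' hv' => ?_, ?_⟩
  · obtain ⟨_, ⟨t, ht, rfl⟩, s, hs, hsv⟩ := Submodule.mem_sup.1 hv'
    have hs1 : s.1 = -t := eq_neg_of_add_eq_zero_right (congrArg Prod.fst hsv)
    have hs2 : s.2 = v' := (zero_add _).symm.trans (congrArg Prod.snd hsv)
    have := hS s hs
    rwa [QuadraticMap.prod_apply, hs1, hs2, QuadraticMap.map_neg, hT t ht, zero_add] at this
  · have hX : finrank F X + finrank F U = finrank F T + finrank F S := by
      rw [← hi U, ← Submodule.map_inf_eq_map_inf_comap, Submodule.finrank_sup_add_finrank_inf_eq,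
        hi T]
    have hX' := finrank_eq_map_fst_add_comap_inr X
    rw [finrank_prod] at hSd
    omega

variable [FiniteDimensional F V] [FiniteDimensional F V'] [CharP F 2]

theorem isMetabolic_prod_of_isometry (g : Q →qᵢ Q') (hd : finrank F V' = finrank F V) :
    IsMetabolic (Q.prod Q') := by
  refine isMetabolic_of_injective (g := LinearMap.id.prod g.toLinearMap)
    (fun v w h => congrArg Prod.fst h) (fun v => ?_) ?_
  · simp [CharTwo.add_self_eq_zero]
  · rw [finrank_prod]
    omega

theorem isMetabolic_prod_of_isometryEquiv (e : Q.IsometryEquiv Q') : IsMetabolic (Q.prod Q') :=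
  isMetabolic_prod_of_isometry e.toIsometry e.toLinearEquiv.finrank_eq.symm

theorem isMetabolic_prod_of_isometryEquiv_prod_zero {U U' : Type*} [AddCommGroup U] [Module F U]
    [AddCommGroup U'] [Module F U'] (hQ : Q.polarBilin.SeparatingLeft)
    (hQ' : Q'.polarBilin.SeparatingLeft)
    (e : (Q.prod (0 : QuadraticForm F U)).IsometryEquiv (Q'.prod (0 : QuadraticForm F U'))) :
    IsMetabolic (Q.prod Q') := by
  let g : Q →qᵢ Q' := (QuadraticMap.Isometry.fst _ Q').comp (e.toIsometry.comp (.inl Q 0))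
  let g' : Q' →qᵢ Q := (QuadraticMap.Isometry.fst _ Q).comp (e.symm.toIsometry.comp (.inl Q' 0))
  exact isMetabolic_prod_of_isometry g <| le_antisymm
    (LinearMap.finrank_le_finrank_of_injective (f := g'.toLinearMap) (injective_of_isometry hQ' g'))
    (LinearMap.finrank_le_finrank_of_injective (f := g.toLinearMap) (injective_of_isometry hQ g))

theorem IsMetabolic.trans {V'' : Type*} [AddCommGroup V''] [Module F V'']
    [FiniteDimensional F V''] {Q'' : QuadraticForm F V''} (hQ' : Q'.polarBilin.SeparatingLeft)
    (h : IsMetabolic (Q.prod Q')) (h' : IsMetabolic (Q'.prod Q'')) : IsMetabolic (Q.prod Q'') :=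
  IsMetabolic.of_prod (separatingLeft_prod hQ' hQ')
    (isMetabolic_prod_of_isometryEquiv (QuadraticMap.IsometryEquiv.refl Q'))
    (((h.of_isometryEquiv (QuadraticMap.IsometryEquiv.prodComm Q Q')).prod h').of_isometryEquiv
      (QuadraticMap.IsometryEquiv.prodProdProdComm Q' Q Q' Q''))

end Metabolic

section BaseChange

variable {F L : Type*} [Field F] [Field L] [Algebra F L]

theorem eq_zero_on_span {V : Type*} [AddCommGroup V] [Module F V] {Q : QuadraticForm F V}
    {s : Set V} (h : ∀ v ∈ s, Q v = 0) (hpolar : ∀ v ∈ s, ∀ w ∈ s, QuadraticMap.polar Q v w = 0)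
    {v : V} (hv : v ∈ Submodule.span F s) : Q v = 0 := by
  have hspan {v w : V} (hv : v ∈ Submodule.span F s) (hw : w ∈ Submodule.span F s) :
      Q.polarBilin v w = 0 := by
    induction hv, hw using Submodule.span_induction₂ with
    | mem_mem v w hv hw => exact hpolar v hv w hw
    | _ => simp_all
  induction hv using Submodule.span_induction with
  | mem v hv => exact h v hv
  | zero => exact QuadraticMap.map_zero Q
  | add v w hv hw hQv hQw =>
    rw [QuadraticMap.map_add Q, hQv, hQw, ← QuadraticMap.polarBilin_apply_apply, hspan hv hw]
    simp
  | smul c v _ hQv => rw [QuadraticMap.map_smul, hQv, smul_zero]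

theorem IsMetabolic.baseChange {ι : Type*} [Finite ι] {Q : QuadraticForm F (ι → F)}
    {Q' : QuadraticForm L (ι → L)}
    (hQ : ∀ v, Q' (algebraMap F L ∘ v) = algebraMap F L (Q v)) (h : IsMetabolic Q) :
    IsMetabolic Q' := by
  cases nonempty_fintype ι
  obtain ⟨S, hS, hSd⟩ := h
  let b := finBasis F S
  have indep : LinearIndependent L fun i => algebraMap F L ∘ (b i : ι → F) :=
    linearIndependent_algebraMap_comp_iff.2 (b.linearIndependent.map' S.subtype S.ker_subtype)
  have hadd (v w : ι → F) : algebraMap F L ∘ v + algebraMap F L ∘ w = algebraMap F L ∘ (v + w) :=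
    funext fun _ => (map_add (algebraMap F L) _ _).symm
  refine ⟨Submodule.span L (Set.range fun i => algebraMap F L ∘ (b i : ι → F)),
    fun v hv => eq_zero_on_span ?_ ?_ hv, ?_⟩
  · rintro _ ⟨i, rfl⟩
    rw [hQ, hS _ (b i).2, map_zero]
  · rintro _ ⟨i, rfl⟩ _ ⟨j, rfl⟩
    simp only [QuadraticMap.polar, hadd, hQ, hS _ (b i).2, hS _ (b j).2,
      hS _ (S.add_mem (b i).2 (b j).2), map_zero, sub_zero]
  · rw [finrank_span_eq_card indep, Fintype.card_fin]
    simpa using hSd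

end BaseChange

section Planes

variable {F : Type*} [Field F] {ι : Type*} [Fintype ι]

/-- The binary form `[c, d]`, on pairs rather than on `Fin 2 → F` as in `QF.bin`. -/
def plane (c d : F) : QuadraticForm F (F × F) :=
  c • QuadraticMap.linMulLin (LinearMap.fst F F F) (LinearMap.fst F F F) +
    QuadraticMap.linMulLin (LinearMap.fst F F F) (LinearMap.snd F F F) +
    d • QuadraticMap.linMulLin (LinearMap.snd F F F) (LinearMap.snd F F F)

/-- The orthogonal sum of the planes `[cᵢ, dᵢ]`. -/
def planes (c d : ι → F) : QuadraticForm F (ι → F × F) :=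
  QuadraticMap.pi fun i => plane (c i) (d i)

theorem plane_apply (c d : F) (v : F × F) :
    plane c d v = c * v.1 ^ 2 + v.1 * v.2 + d * v.2 ^ 2 := by
  simp [plane, sq]

theorem planes_apply (c d : ι → F) (v : ι → F × F) :
    planes c d v = ∑ i, plane (c i) (d i) (v i) :=
  QuadraticMap.pi_apply _ v

theorem planes_single [DecidableEq ι] (c d : ι → F) (j : ι) (u : F × F) :
    planes c d (Pi.single j u) = plane (c j) (d j) u := by
  rw [planes_apply, Finset.sum_eq_single j (fun i _ hi => by rw [Pi.single_eq_of_ne hi, map_zero])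
    (by simp), Pi.single_eq_same]

theorem plane_mul_div_apply {a : F} (c d : F) (ha : a ≠ 0) (v : F × F) :
    plane (a * c) (d / a) (v.1, a * v.2) = a * plane c d v := by
  simp only [plane_apply]
  field_simp

theorem planes_map {E : Type*} [Field E] (f : F →+* E) (c d : ι → F) (v : ι → F × F) :
    planes (f ∘ c) (f ∘ d) (fun i => (f (v i).1, f (v i).2)) = f (planes c d v) := by
  simp [planes_apply, plane_apply]

/-- `[c₀, d₀] ⊥ ⨁ᵢ [cᵢ, dᵢ]` as a single sum of planes. -/
def planesConsEquiv {m : ℕ} (c₀ d₀ : F) (c d : Fin m → F) :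
    ((plane c₀ d₀).prod (planes c d)).IsometryEquiv
      (planes (Fin.cons c₀ c : Fin (m + 1) → F) (Fin.cons d₀ d : Fin (m + 1) → F)) where
  __ := Fin.consLinearEquiv F fun _ => F × F
  map_app' v := by
    simp [planes_apply, Fin.sum_univ_succ]

theorem isMetabolic_plane {c d : F} {v : F × F} (hv : v ≠ 0) (h : plane c d v = 0) :
    IsMetabolic (plane c d) :=
  isMetabolic_of_injective (g := LinearMap.toSpanSingleton F (F × F) v)
    (LinearMap.ker_eq_bot.1 (LinearMap.ker_toSpanSingleton F hv))
    (fun r => by simp [QuadraticMap.map_smul, h]) (by simp)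

variable [CharP F 2]

theorem polar_plane (c d : F) (v w : F × F) :
    QuadraticMap.polar (plane c d) v w = v.1 * w.2 + v.2 * w.1 := by
  simp only [QuadraticMap.polar, plane_apply, Prod.fst_add, Prod.snd_add]
  linear_combination (c * v.1 * w.1 + d * v.2 * w.2) * CharTwo.two_eq_zero (R := F)

theorem polar_planes (c d : ι → F) (v w : ι → F × F) :
    QuadraticMap.polar (planes c d) v w = ∑ i, ((v i).1 * (w i).2 + (v i).2 * (w i).1) := by
  simp only [QuadraticMap.polar, planes_apply, ← Finset.sum_sub_distrib, Pi.add_apply]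
  exact Finset.sum_congr rfl fun i _ => polar_plane (c i) (d i) (v i) (w i)

theorem separatingLeft_plane (c d : F) : (plane c d).polarBilin.SeparatingLeft := by
  intro v hv
  simp only [QuadraticMap.polarBilin_apply_apply, polar_plane] at hv
  exact Prod.ext (by simpa using hv (0, 1)) (by simpa using hv (1, 0))

theorem polar_planes_single [DecidableEq ι] (c d : ι → F) (v : ι → F × F) (j : ι) (u : F × F) :
    QuadraticMap.polar (planes c d) v (Pi.single j u) = (v j).1 * u.2 + (v j).2 * u.1 := by
  rw [polar_planes, Finset.sum_eq_single j (fun i _ hi => by simp [hi]) (by simp),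
    Pi.single_eq_same]

theorem separatingLeft_planes (c d : ι → F) : (planes c d).polarBilin.SeparatingLeft := by
  classical
  intro v hv
  have hsingle (i : ι) (u : F × F) : (v i).1 * u.2 + (v i).2 * u.1 = 0 := by
    rw [← polar_planes_single c d, ← hv (Pi.single i u), QuadraticMap.polarBilin_apply_apply]
  exact funext fun i => Prod.ext (by simpa using hsingle i (0, 1)) (by simpa using hsingle i (1, 0))

end Planes

section Decomposition

variable {F V : Type*} [Field F] [AddCommGroup V] [Module F V] {Q : QuadraticForm F V}

theorem exists_polar_eq_one (hQ : Q.polarBilin.SeparatingLeft) {v : V} (hv : v ≠ 0) :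
    ∃ w, QuadraticMap.polar Q v w = 1 := by
  obtain ⟨w, hw⟩ : ∃ w, QuadraticMap.polar Q v w ≠ 0 := by
    by_contra! h
    exact hv (hQ v h)
  exact ⟨(QuadraticMap.polar Q v w)⁻¹ • w, by
    rw [QuadraticMap.polar_smul_right, smul_eq_mul, inv_mul_cancel₀ hw]⟩

theorem IsMetabolic.exists_ne_zero [FiniteDimensional F V] [Nontrivial V] (h : IsMetabolic Q) :
    ∃ v ≠ 0, Q v = 0 := by
  obtain ⟨S, hS, hSd⟩ := h
  have hpos : 0 < finrank F V := finrank_pos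
  obtain ⟨v, hv, hv0⟩ := S.exists_mem_ne_zero_of_ne_bot (by rintro rfl; simp at hSd; omega)
  exact ⟨v, hv0, hS v hv⟩

variable [CharP F 2]

theorem exists_isotropic_polar_eq_one (hQ : Q.polarBilin.SeparatingLeft) {v : V} (hv : v ≠ 0)
    (hQv : Q v = 0) : ∃ w, QuadraticMap.polar Q v w = 1 ∧ Q w = 0 := by
  obtain ⟨w, hw⟩ := exists_polar_eq_one hQ hv
  refine ⟨w + Q w • v, ?_, ?_⟩
  · simp [QuadraticMap.polar_add_right, CharTwo.two_eq_zero, hw]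
  · rw [QuadraticMap.map_add Q, QuadraticMap.map_smul, hQv, QuadraticMap.polar_smul_right,
      QuadraticMap.polar_comm, hw]
    simp [CharTwo.add_self_eq_zero]

theorem exists_isometryEquiv_plane_prod {v w : V} (hvw : QuadraticMap.polar Q v w = 1) :
    ∃ U : Submodule F V,
      Nonempty (((plane (Q v) (Q w)).prod (Q.comp U.subtype)).IsometryEquiv Q) := by
  have hwv : QuadraticMap.polar Q w v = 1 := by rw [QuadraticMap.polar_comm, hvw]
  let U : Submodule F V := LinearMap.ker (Q.polarBilin v) ⊓ LinearMap.ker (Q.polarBilin w)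
  have hU (u : U) : QuadraticMap.polar Q v u = 0 ∧ QuadraticMap.polar Q w u = 0 := u.2
  let g : (F × F) × U →ₗ[F] V :=
    ((LinearMap.toSpanSingleton F V v).coprod (LinearMap.toSpanSingleton F V w)).coprod U.subtype
  have hg (z : (F × F) × U) : g z = z.1.1 • v + z.1.2 • w + z.2 := by simp [g]
  have injective : Function.Injective g := by
    refine (injective_iff_map_eq_zero g).2 fun ⟨⟨s, t⟩, u⟩ h => ?_
    rw [hg] at h
    have ht : t = 0 := by
      simpa [QuadraticMap.polar_add_right, CharTwo.two_eq_zero, hU u, hvw]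
        using congrArg (QuadraticMap.polar Q v) h
    have hs : s = 0 := by
      simpa [QuadraticMap.polar_add_right, CharTwo.two_eq_zero, hU u, hwv]
        using congrArg (QuadraticMap.polar Q w) h
    simp_all
  have surjective : Function.Surjective g := fun x =>
    ⟨((QuadraticMap.polar Q w x, QuadraticMap.polar Q v x),
      ⟨x - QuadraticMap.polar Q w x • v - QuadraticMap.polar Q v x • w, by
        constructor <;> simp [QuadraticMap.polar_sub_right, CharTwo.two_eq_zero, hvw, hwv]⟩),
      by rw [hg]; simp⟩
  refine ⟨U, ⟨{ LinearEquiv.ofBijective g ⟨injective, surjective⟩ with map_app' := ?_ }⟩⟩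
  rintro ⟨⟨s, t⟩, u⟩
  refine (congrArg Q (hg _)).trans ?_
  simp only [QuadraticMap.map_add Q, QuadraticMap.polar_add_left, QuadraticMap.polar_smul_left,
    QuadraticMap.polar_smul_right, hU u, hvw, QuadraticMap.map_smul, QuadraticMap.prod_apply,
    plane_apply, QuadraticMap.comp_apply, smul_eq_mul, Submodule.subtype_apply]
  ring

theorem exists_isometryEquiv_planes [FiniteDimensional F V] (hQ : Q.polarBilin.SeparatingLeft) :
    ∃ (m : ℕ) (c d : Fin m → F), Nonempty (Q.IsometryEquiv (planes c d)) ∧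
      (IsMetabolic Q → c = 0 ∧ d = 0) := by
  induction hN : finrank F V using Nat.strong_induction_on generalizing V with
  | _ N ih =>
  subst hN
  cases subsingleton_or_nontrivial V with
  | inl _ =>
    refine ⟨0, 0, 0, ⟨LinearEquiv.ofSubsingleton _ _, fun v => ?_⟩, fun _ => ⟨rfl, rfl⟩⟩
    simp [planes_apply, Subsingleton.elim v 0]
  | inr _ =>
    obtain ⟨v, w, hvw, hQvw⟩ : ∃ v w, QuadraticMap.polar Q v w = 1 ∧
        (IsMetabolic Q → Q v = 0 ∧ Q w = 0) := by
      by_cases hM : IsMetabolic Q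
      · obtain ⟨v, hv, hQv⟩ := hM.exists_ne_zero
        obtain ⟨w, hvw, hQw⟩ := exists_isotropic_polar_eq_one hQ hv hQv
        exact ⟨v, w, hvw, fun _ => ⟨hQv, hQw⟩⟩
      · obtain ⟨v, hv⟩ := exists_ne (0 : V)
        obtain ⟨w, hvw⟩ := exists_polar_eq_one hQ hv
        exact ⟨v, w, hvw, fun h => absurd h hM⟩
    obtain ⟨U, ⟨e⟩⟩ := exists_isometryEquiv_plane_prod hvw
    have hdim : finrank F ((F × F) × U) = finrank F V := e.toLinearEquiv.finrank_eq
    rw [finrank_prod, finrank_prod, finrank_self] at hdim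
    obtain ⟨m, c, d, ⟨e'⟩, hcd⟩ := ih (finrank F U) (by omega)
      (separatingLeft_of_prod_right (separatingLeft_of_isometryEquiv hQ e.symm)) rfl
    refine ⟨m + 1, Fin.cons (Q v) c, Fin.cons (Q w) d,
      ⟨(e.symm.trans ((QuadraticMap.IsometryEquiv.refl _).prod e')).trans
        (planesConsEquiv _ _ _ _)⟩, fun hM => ?_⟩
    obtain ⟨hQv, hQw⟩ := hQvw hM
    obtain ⟨rfl, rfl⟩ := hcd (IsMetabolic.of_prod (separatingLeft_plane _ _)
      (isMetabolic_plane (v := (1, 0)) (by simp) (by simp [plane_apply, hQv]))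
      (hM.of_isometryEquiv e.symm))
    rw [hQv, hQw]
    exact ⟨Fin.cons_self_tail 0, Fin.cons_self_tail 0⟩

end Decomposition

section Split

variable {K : Type*} [Field K] [CharP K 2]

theorem plane_add_smul (c d e s : K) (u w : K × K) :
    plane (c + u.2 ^ 2 * e) (d + u.1 ^ 2 * e) (w + s • u) =
      plane c d w + s ^ 2 * plane c d u + s * QuadraticMap.polar (plane c d) u w +
        e * QuadraticMap.polar (plane c d) u w ^ 2 := by
  simp only [plane_apply, polar_plane, Prod.fst_add, Prod.snd_add, Prod.smul_fst, Prod.smul_snd,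
    smul_eq_mul]
  linear_combination (c * w.1 * s * u.1 + d * w.2 * s * u.2 + e * s ^ 2 * u.1 ^ 2 * u.2 ^ 2 +
    e * s * u.1 * u.2 * (u.1 * w.2 + u.2 * w.1) - e * u.1 * u.2 * w.1 * w.2) *
      CharTwo.two_eq_zero (R := K)

/-- Splitting the plane spanned by `v` and the `j`-th vector `(1, 0)` off a sum of planes, for `v`
whose `j`-th component is `(_, 1)`. Its complement is projected isomorphically to the remaining
components, on which it induces planes with explicitly changed coefficients. -/
def splitPlane {m : ℕ} (c d : Fin (m + 1) → K) (j : Fin (m + 1)) (v : Fin (m + 1) → K × K)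
    (hv : (v j).2 = 1) :
    planes c d →qᵢ (plane (c j) (planes c d v)).prod
      (planes (fun i => c (j.succAbove i) + (v (j.succAbove i)).2 ^ 2 * c j)
        fun i => d (j.succAbove i) + (v (j.succAbove i)).1 ^ 2 * c j) where
  toFun w := ((QuadraticMap.polar (planes c d) v w, (w j).2),
    fun i => w (j.succAbove i) + (w j).2 • v (j.succAbove i))
  map_add' w w' := by
    ext <;> simp [QuadraticMap.polar_add_right, add_mul, add_add_add_comm]
  map_smul' r w := by
    ext <;> simp [QuadraticMap.polar_smul_right, mul_assoc]
  map_app' w := by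
    obtain ⟨p, hp⟩ : ∃ p : Fin (m + 1) → K, ∀ i,
        QuadraticMap.polar (plane (c i) (d i)) (v i) (w i) = p i := ⟨_, fun _ => rfl⟩
    have hsum : QuadraticMap.polar (planes c d) v w = p j + ∑ i, p (j.succAbove i) := by
      rw [polar_planes, Fin.sum_univ_succAbove _ j]
      simp only [← hp, polar_plane]
    have hpj : p j = (v j).1 * (w j).2 + (w j).1 := by rw [← hp, polar_plane, hv, one_mul]
    have hsq : (∑ i, p (j.succAbove i)) ^ 2 = ∑ i, p (j.succAbove i) ^ 2 := by
      simp only [sq, CharTwo.sum_mul_self]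
    simp only [QuadraticMap.prod_apply, planes_apply, plane_add_smul, hsum]
    simp only [plane_apply (c j), Fin.sum_univ_succAbove _ j, Finset.sum_add_distrib,
      ← Finset.mul_sum, hp, hv, ← hsq, hpj]
    generalize ∑ i, p (j.succAbove i) = P
    generalize ∑ i, plane _ _ (v (j.succAbove i)) = A
    linear_combination (c j * ((v j).1 * (w j).2 + (w j).1) * P + c j * P ^ 2 + P * (w j).2 +
      A * (w j).2 ^ 2 + c j * (v j).1 ^ 2 * (w j).2 ^ 2 + c j * (v j).1 * (w j).2 * (w j).1 +
      (v j).1 * (w j).2 ^ 2) * CharTwo.two_eq_zero (R := K)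

theorem IsMetabolic.splitPlane {m : ℕ} {c d : Fin (m + 1) → K} (h : IsMetabolic (planes c d))
    {j : Fin (m + 1)} {v : Fin (m + 1) → K × K} (hv : (v j).2 = 1)
    (hplane : IsMetabolic (plane (c j) (planes c d v))) :
    IsMetabolic (planes (fun i => c (j.succAbove i) + (v (j.succAbove i)).2 ^ 2 * c j)
      fun i => d (j.succAbove i) + (v (j.succAbove i)).1 ^ 2 * c j) :=
  IsMetabolic.of_prod (separatingLeft_plane _ _) hplane <|
    h.of_isometry (separatingLeft_planes c d) (QF.splitPlane c d j v hv) <| le_of_eq <| by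
      simp only [finrank_prod, finrank_pi_fintype, finrank_self, Finset.sum_const, Finset.card_univ,
        Fintype.card_fin, smul_eq_mul]
      ring

end Split

section QuadraticExtension

variable {K L : Type*} [Field K] [Field L] [Algebra K L] {β : L}

open Polynomial in
theorem finite_and_finrank_le_natDegree {f : K[X]} (hf : f.Monic) (hβ : aeval β f = 0)
    (hgen : Algebra.adjoin K {β} = ⊤) : Module.Finite K L ∧ finrank K L ≤ f.natDegree := by
  classical
  have hspan := Submodule.span_range_natDegree_eq_adjoin hf hβ
  rw [hgen, Algebra.top_toSubmodule] at hspan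
  refine ⟨⟨_, hspan⟩, ?_⟩
  rw [← finrank_top, ← hspan]
  exact (finrank_span_finset_le_card _).trans
    (Finset.card_image_le.trans (Finset.card_range _).le)

theorem finrank_eq_one_of_mem_range (hgen : Algebra.adjoin K {β} = ⊤)
    (hβ : β ∈ (algebraMap K L).range) : finrank K L = 1 :=
  Subalgebra.bot_eq_top_iff_finrank_eq_one.1 <| top_le_iff.1 <| hgen ▸
    Algebra.adjoin_le (Set.singleton_subset_iff.2 (Algebra.mem_bot.2 hβ))

variable {V V' : Type*} [AddCommGroup V] [Module K V] [FiniteDimensional K V] [AddCommGroup V']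
  [Module K V'] [Module L V'] [IsScalarTower K L V'] [FiniteDimensional L V']
  {Q : QuadraticForm K V} {Q' : QuadraticForm L V'} {b : K}

theorem finrank_eq_two_and_surjective_mkQ_comp (hβ : β ^ 2 + β + algebraMap K L b = 0)
    (hgen : Algebra.adjoin K {β} = ⊤) (f : V →ₗ[K] V')
    (hf : ∀ v, Q' (f v) = algebraMap K L (Q v)) (hd : finrank L V' = finrank K V)
    (hQ : Q.Anisotropic) [Nontrivial V] {S : Submodule L V'} (hS : ∀ v ∈ S, Q' v = 0)
    (hSd : finrank L V' ≤ 2 * finrank L S) :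
    finrank K L = 2 ∧ Function.Surjective (S.mkQ.restrictScalars K ∘ₗ f) := by
  obtain ⟨_, hKL⟩ := finite_and_finrank_le_natDegree (f := .X ^ 2 + .X + .C b)
    (by monicity!) (by simpa using hβ) hgen
  rw [show (.X ^ 2 + .X + .C b : Polynomial K).natDegree = 2 by compute_degree!] at hKL
  have injective : Function.Injective (S.mkQ.restrictScalars K ∘ₗ f) :=
    (injective_iff_map_eq_zero _).2 fun v hv => hQ v <| by
      simpa [hf] using hS _ ((Submodule.Quotient.mk_eq_zero S).1 hv)
  have finite : FiniteDimensional K (V' ⧸ S) := FiniteDimensional.trans K L _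
  have hdim := finrank_mul_finrank K L (V' ⧸ S)
  have hquot := S.finrank_quotient_add_finrank
  have hle := LinearMap.finrank_le_finrank_of_injective injective
  have hpos : 0 < finrank K V := finrank_pos
  have hKL2 : finrank K L = 2 := by
    interval_cases finrank K L <;> omega
  refine ⟨hKL2, (LinearMap.injective_iff_surjective_of_finrank_eq_finrank ?_).1 injective⟩
  rw [hKL2] at hdim
  omega

theorem exists_polar_eq_of_anisotropic (hβ : β ^ 2 + β + algebraMap K L b = 0)
    (hgen : Algebra.adjoin K {β} = ⊤) (f : V →ₗ[K] V')
    (hf : ∀ v, Q' (f v) = algebraMap K L (Q v)) (hd : finrank L V' = finrank K V)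
    (hQ : Q.Anisotropic) (hQ' : IsMetabolic Q') {e : V} (he : e ≠ 0) :
    ∃ w, QuadraticMap.polar Q w e = Q e ∧ Q w = b * Q e := by
  obtain ⟨S, hS, hSd⟩ := hQ'
  have := nontrivial_of_ne e 0 he
  obtain ⟨hKL, surjective⟩ := finrank_eq_two_and_surjective_mkQ_comp hβ hgen f hf hd hQ hS hSd
  -- Lift `-βe` through `V ≅ V' ⧸ S`, then compare coefficients of `1` and `β` in `Q' (w + βe) = 0`.
  obtain ⟨w, hw⟩ := surjective (-S.mkQ (β • f e))
  have hmem : f w + β • f e ∈ S := (Submodule.Quotient.mk_eq_zero S).1 <|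
    (congrArg (· + S.mkQ (β • f e)) hw).trans (neg_add_cancel _)
  have hpolar : QuadraticMap.polar Q' (f w) (f e) = algebraMap K L (QuadraticMap.polar Q w e) := by
    simp only [QuadraticMap.polar, ← map_add, hf, map_sub]
  have hzero := hS _ hmem
  rw [QuadraticMap.map_add Q', QuadraticMap.map_smul, QuadraticMap.polar_smul_right, hpolar, hf, hf,
    smul_eq_mul, smul_eq_mul] at hzero
  have hlin : β * algebraMap K L (QuadraticMap.polar Q w e - Q e) =
      algebraMap K L (b * Q e - Q w) := by
    simp only [map_sub, map_mul]
    linear_combination hzero - algebraMap K L (Q e) * hβ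
  have hpolar_eq : QuadraticMap.polar Q w e - Q e = 0 := by
    by_contra h
    have := finrank_eq_one_of_mem_range hgen ⟨(b * Q e - Q w) / (QuadraticMap.polar Q w e - Q e), by
      rw [map_div₀, ← hlin, mul_div_cancel_right₀ _ ((map_ne_zero _).2 h)]⟩
    omega
  rw [hpolar_eq, map_zero, mul_zero, eq_comm, FaithfulSMul.algebraMap_eq_zero_iff] at hlin
  exact ⟨w, sub_eq_zero.1 hpolar_eq, (sub_eq_zero.1 hlin).symm⟩

end QuadraticExtension

section MixedSymbol

variable {F K : Type*} [Field F] [Field K] [Algebra F K]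

/-- A symbol `(c, d) ↦ {c, d}` with `c ∈ F` and `d ∈ K`, where `φ : K →+* F` squares elements of
`K`. It obeys the relations of the Witt classes of the binary forms `[c, c φ(d)]`, which replace
the missing classes of the forms `[c, d]` over `K`. -/
structure MixedSymbol (φ : K →+* F) (W : Type*) [AddCommGroup W] where
  toHom : F →+ K →+ W
  toHom_mul_apply : ∀ c r d, toHom (c * φ r) d = toHom c (r ^ 2 * d)
  toHom_sq_mul_comm : ∀ c r c',
    toHom c (r ^ 2 * algebraMap F K c') = toHom c' (r ^ 2 * algebraMap F K c)
  toHom_add_mul_sq : ∀ c r, toHom c (r + algebraMap F K c * r ^ 2) = 0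

namespace MixedSymbol

variable {φ : K →+* F} {W : Type*} [AddCommGroup W] (D : MixedSymbol φ W)

theorem toHom_add_self [CharP K 2] (c : F) (d : K) : D.toHom c d + D.toHom c d = 0 := by
  rw [← map_add, CharTwo.add_self_eq_zero, map_zero]

theorem toHom_plane_of_snd_eq_one (c : F) (d : K) {u : K × K} (hu : u.2 = 1) :
    D.toHom c (plane (algebraMap F K c) d u) = D.toHom c d := by
  have h := D.toHom_add_mul_sq c u.1
  rw [plane_apply, hu, mul_one, one_pow, mul_one, map_add, add_comm (_ * _), h, zero_add]

theorem toHom_add_mul_add [CharP K 2] (c c' : F) (d : K) (u : K × K) :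
    D.toHom (c' + c * φ u.2) (d + u.1 ^ 2 * algebraMap F K c) =
      D.toHom c' d + D.toHom c (plane (algebraMap F K c') d u) := by
  have hxy : D.toHom c (u.2 ^ 2 * (u.1 ^ 2 * algebraMap F K c)) = D.toHom c (u.1 * u.2) := by
    rw [← sub_eq_zero, ← map_sub, CharTwo.sub_eq_add, ← D.toHom_add_mul_sq c (u.1 * u.2)]
    ring_nf
  rw [map_add D.toHom, AddMonoidHom.add_apply, map_add, map_add, D.toHom_sq_mul_comm c',
    D.toHom_mul_apply, D.toHom_mul_apply, hxy, plane_apply, map_add, map_add, mul_comm (u.1 ^ 2),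
    mul_comm (u.2 ^ 2)]
  abel

theorem sum_splitPlane [CharP K 2] {m : ℕ} (c : Fin (m + 1) → F) (d : Fin (m + 1) → K)
    {j : Fin (m + 1)} {v : Fin (m + 1) → K × K} (hv : (v j).2 = 1) :
    D.toHom (c j) (planes (algebraMap F K ∘ c) d v) +
        ∑ i, D.toHom (c (j.succAbove i) + c j * φ (v (j.succAbove i)).2)
          (d (j.succAbove i) + (v (j.succAbove i)).1 ^ 2 * algebraMap F K (c j)) =
      ∑ i, D.toHom (c i) (d i) := by
  simp only [planes_apply, Function.comp_apply, toHom_add_mul_add, Finset.sum_add_distrib,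
    Fin.sum_univ_succAbove _ j]
  rw [map_add, map_sum, D.toHom_plane_of_snd_eq_one _ _ hv, add_add_add_comm,
    ← Finset.sum_add_distrib]
  simp only [toHom_add_self, Finset.sum_const_zero, add_zero]

end MixedSymbol

end MixedSymbol

section Descent

variable {K L : Type*} [Field K] [Field L] [Algebra K L] {β : L} {b : K}

theorem isMetabolic_plane_map (hβ : β ^ 2 + β + algebraMap K L b = 0) {c δ : K}
    (h : δ = 0 ∨ c ≠ 0 ∧ δ = b / c) :
    IsMetabolic (plane (algebraMap K L c) (algebraMap K L δ)) := by
  obtain rfl | ⟨hc, rfl⟩ := h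
  · exact isMetabolic_plane (v := (0, 1)) (by simp) (by simp [plane_apply])
  · have hc' : algebraMap K L c ≠ 0 := (map_ne_zero _).2 hc
    refine isMetabolic_plane (v := (β, algebraMap K L c)) (by simp [hc']) ?_
    rw [plane_apply, map_div₀]
    field_simp
    linear_combination algebraMap K L c * hβ

variable [CharP K 2]

theorem exists_isotropic_snd_eq_one {m : ℕ} {c d : Fin (m + 1) → K}
    (h : ¬(planes c d).Anisotropic) :
    ∃ (j : Fin (m + 1)) (v : Fin (m + 1) → K × K), (v j).2 = 1 ∧ planes c d v = 0 := by
  obtain ⟨v, hQv, hv⟩ : ∃ v, planes c d v = 0 ∧ v ≠ 0 := by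
    simpa [QuadraticMap.Anisotropic] using h
  by_cases hy : ∃ j, (v j).2 ≠ 0
  · obtain ⟨j, hj⟩ := hy
    exact ⟨j, (v j).2⁻¹ • v, inv_mul_cancel₀ hj, by rw [QuadraticMap.map_smul, hQv, smul_zero]⟩
  push Not at hy
  obtain ⟨j, hj⟩ := Function.ne_iff.1 hv
  have hx : (v j).1 ≠ 0 := fun hx => hj (Prod.ext hx (hy j))
  refine ⟨j, (d j / (v j).1) • v + Pi.single j (0, 1), by simp [hy], ?_⟩
  have hpolar : QuadraticMap.polar (planes c d) v (Pi.single j (0, 1)) = (v j).1 := by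
    rw [polar_planes_single, mul_one, mul_zero, add_zero]
  have hsingle : planes c d (Pi.single j (0, 1)) = d j := by
    simp [planes_single, plane_apply]
  rw [QuadraticMap.map_add (planes c d), QuadraticMap.map_smul, hQv, QuadraticMap.polar_smul_left,
    hpolar, hsingle, smul_zero, zero_add, smul_eq_mul, div_mul_cancel₀ _ hx,
    CharTwo.add_self_eq_zero]

theorem exists_splitting_vector (hβ : β ^ 2 + β + algebraMap K L b = 0)
    (hgen : Algebra.adjoin K {β} = ⊤) {m : ℕ} {c d : Fin (m + 1) → K}
    (h : IsMetabolic (planes (algebraMap K L ∘ c) (algebraMap K L ∘ d))) :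
    ∃ (j : Fin (m + 1)) (v : Fin (m + 1) → K × K), (v j).2 = 1 ∧
      (planes c d v = 0 ∨ c j ≠ 0 ∧ planes c d v = b / c j) := by
  by_cases hQ : (planes c d).Anisotropic
  swap
  · obtain ⟨j, v, hv, hQv⟩ := exists_isotropic_snd_eq_one hQ
    exact ⟨j, v, hv, .inl hQv⟩
  let f : (Fin (m + 1) → K × K) →ₗ[K] Fin (m + 1) → L × L :=
    LinearMap.compLeft ((Algebra.linearMap K L).prodMap (Algebra.linearMap K L)) _
  have hne : (Pi.single 0 (1, 0) : Fin (m + 1) → K × K) ≠ 0 := by simp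
  have hsingle : planes c d (Pi.single 0 (1, 0)) = c 0 := by
    simp [planes_single, plane_apply]
  have hc : c 0 ≠ 0 := hsingle ▸ fun h0 => hne (hQ _ h0)
  obtain ⟨w, hpolar, hw⟩ := exists_polar_eq_of_anisotropic hβ hgen f
    (planes_map (algebraMap K L) c d) (by simp [finrank_pi_fintype]) hQ h hne
  have hw0 : (w 0).2 = c 0 := by
    rw [← hsingle, ← hpolar, polar_planes_single, mul_zero, mul_one, zero_add]
  refine ⟨0, (c 0)⁻¹ • w, by simp [hw0, hc], .inr ⟨hc, ?_⟩⟩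
  rw [QuadraticMap.map_smul, hw, hsingle, smul_eq_mul]
  field_simp

variable {F : Type*} [Field F] [Algebra F K] {φ : K →+* F} {W : Type*} [AddCommGroup W]

theorem MixedSymbol.sum_eq_zero (D : MixedSymbol φ W)
    (hφ : ∀ t, algebraMap F K (φ t) = t ^ 2) {b : F}
    (hD : ∀ c, c ≠ 0 → D.toHom c (algebraMap F K (b / c)) = 0)
    (hβ : β ^ 2 + β + algebraMap K L (algebraMap F K b) = 0) (hgen : Algebra.adjoin K {β} = ⊤)
    {m : ℕ} (c : Fin m → F) (d : Fin m → K)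
    (h : IsMetabolic (planes (algebraMap K L ∘ algebraMap F K ∘ c) (algebraMap K L ∘ d))) :
    ∑ i, D.toHom (c i) (d i) = 0 := by
  have := charP_of_injective_algebraMap (algebraMap K L).injective 2
  induction m with
  | zero => simp
  | succ m ih =>
    obtain ⟨j, v, hv, hδ⟩ := exists_splitting_vector hβ hgen h
    have hsym : D.toHom (c j) (planes (algebraMap F K ∘ c) d v) = 0 := by
      obtain h0 | ⟨hc, h0⟩ := hδ
      · rw [h0, map_zero]
      · rw [h0, Function.comp_apply, ← map_div₀, hD _ fun h => hc (by simp [h])]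
    have hplane := isMetabolic_plane_map hβ hδ
    rw [← planes_map (algebraMap K L)] at hplane
    rw [← D.sum_splitPlane c d hv, hsym, zero_add]
    refine ih _ _ ?_
    convert h.splitPlane (v := fun i => (algebraMap K L (v i).1, algebraMap K L (v i).2))
      (by simp [hv]) hplane using 2 <;> ext i <;> simp [hφ, mul_comm]

end Descent

section ToForm

variable {F : Type*} [Field F]

/-- The quadratic form on `F ^ q.dim` given by the coefficients of `q`. -/
def toForm (q : QF F) : QuadraticForm F (Fin q.dim → F) :=
  q.c.toQuadraticForm'

theorem toForm_apply (q : QF F) (v : Fin q.dim → F) : q.toForm v = q.eval v := by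
  simp only [toForm, Matrix.toQuadraticForm', LinearMap.BilinMap.toQuadraticMap_apply,
    Matrix.toLinearMap₂'_apply, eval, smul_eq_mul]
  exact Finset.sum_congr rfl fun i _ => Finset.sum_congr rfl fun j _ => by ring

theorem isometric_iff {q q' : QF F} :
    q.Isometric q' ↔ Nonempty (q.toForm.IsometryEquiv q'.toForm) := by
  simp only [Isometric, ← toForm_apply]
  exact ⟨fun ⟨e, he⟩ => ⟨{ e with map_app' := he }⟩, fun ⟨e⟩ => ⟨e.toLinearEquiv, e.map_app⟩⟩

theorem nonsingular_iff_det_ne_zero {q : QF F} : q.Nonsingular ↔ (q.c + q.c.transpose).det ≠ 0 := by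
  rw [Ne, ← Matrix.exists_mulVec_eq_zero_iff]
  simp only [Nonsingular, not_exists, not_and', not_not]

theorem nonsingular_iff_separatingLeft {q : QF F} :
    q.Nonsingular ↔ q.toForm.polarBilin.SeparatingLeft := by
  have hpolar : q.toForm.polarBilin = Matrix.toLinearMap₂' F (q.c + q.c.transpose) := by
    refine LinearMap.ext₂ fun v w => ?_
    rw [QuadraticMap.polarBilin_apply_apply, toForm, Matrix.toQuadraticForm',
      LinearMap.BilinMap.polar_toQuadraticMap]
    simp only [Matrix.toLinearMap₂'_apply', Matrix.add_mulVec, dotProduct_add,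
      Matrix.mulVec_transpose, Matrix.dotProduct_mulVec w, dotProduct_comm v (Matrix.vecMul _ _)]
  rw [nonsingular_iff_det_ne_zero, hpolar, LinearMap.separatingLeft_toLinearMap₂'_iff_det_ne_zero]

theorem Nonsingular.of_isometryEquiv {V : Type*} [AddCommGroup V] [Module F V]
    {Q : QuadraticForm F V} (hQ : Q.polarBilin.SeparatingLeft) {q : QF F}
    (e : q.toForm.IsometryEquiv Q) : q.Nonsingular :=
  nonsingular_iff_separatingLeft.2 (separatingLeft_of_isometryEquiv hQ e.symm)

/-- The orthogonal sum of coefficient matrices is the orthogonal sum of quadratic forms. -/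
def orthSumEquiv (q q' : QF F) :
    (q.orthSum q').toForm.IsometryEquiv (q.toForm.prod q'.toForm) where
  __ := (LinearEquiv.funCongrLeft F F finSumFinEquiv).trans
    (LinearEquiv.sumArrowLequivProdArrow (Fin q.dim) (Fin q'.dim) F F)
  map_app' v := by
    rw [QuadraticMap.prod_apply, toForm_apply, toForm_apply]
    refine Eq.trans ?_ (toForm_apply _ _).symm
    change _ = ∑ i : Fin (q.dim + q'.dim), ∑ j, Matrix.reindex finSumFinEquiv finSumFinEquiv
      (Matrix.fromBlocks q.c 0 0 q'.c) i j * v i * v j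
    simp [Fin.sum_univ_add]
    rfl

theorem Nonsingular.orthSum {q q' : QF F} (hq : q.Nonsingular) (hq' : q'.Nonsingular) :
    (q.orthSum q').Nonsingular :=
  .of_isometryEquiv (separatingLeft_prod (nonsingular_iff_separatingLeft.1 hq)
    (nonsingular_iff_separatingLeft.1 hq')) (orthSumEquiv q q')

theorem nonsingular_nil : (nil : QF F).Nonsingular := fun x _ =>
  Subsingleton.elim (α := Fin 0 → F) x 0

theorem nonsingular_sumList {l : List (QF F)} (h : ∀ q ∈ l, q.Nonsingular) :
    (sumList l).Nonsingular := by
  induction l with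
  | nil => exact nonsingular_nil
  | cons q l ih =>
    exact (h q List.mem_cons_self).orthSum (ih fun p hp => h p (List.mem_cons_of_mem _ hp))

/-- The orthogonal sum respects isometries. -/
def orthSumCongr {q₁ q₂ q₁' q₂' : QF F} (e : q₁.toForm.IsometryEquiv q₂.toForm)
    (e' : q₁'.toForm.IsometryEquiv q₂'.toForm) :
    (q₁.orthSum q₁').toForm.IsometryEquiv (q₂.orthSum q₂').toForm :=
  ((orthSumEquiv q₁ q₁').trans (e.prod e')).trans (orthSumEquiv q₂ q₂').symm

/-- Commutativity of the orthogonal sum. -/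
def orthSumComm (q q' : QF F) :
    (q.orthSum q').toForm.IsometryEquiv (q'.orthSum q).toForm :=
  ((orthSumEquiv q q').trans (.prodComm _ _)).trans (orthSumEquiv q' q).symm

/-- Associativity of the orthogonal sum. -/
def orthSumAssoc (q q' q'' : QF F) :
    ((q.orthSum q').orthSum q'').toForm.IsometryEquiv (q.orthSum (q'.orthSum q'')).toForm :=
  ((orthSumEquiv _ q'').trans ((orthSumEquiv q q').prod (.refl _))).trans
    ((prodAssocIsometryEquiv q.toForm q'.toForm q''.toForm).trans
      ((orthSumEquiv q _).trans (.prod (.refl _) (orthSumEquiv q' q''))).symm)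

theorem isMetabolic_nil : IsMetabolic (nil : QF F).toForm :=
  isMetabolic_of_finrank_eq_zero (by exact finrank_fin_fun F) _

theorem toForm_smul_apply (a : F) (q : QF F) (v : Fin q.dim → F) :
    (q.smul a).toForm v = a * q.toForm v := by
  refine (toForm_apply (q.smul a) v).trans ?_
  simp only [toForm_apply, eval, Finset.mul_sum, ← mul_assoc]
  rfl

theorem toForm_zeros (l : ℕ) : (zeros l : QF F).toForm = 0 := by
  ext v
  rw [toForm_apply]
  change ∑ i, ∑ j, Matrix.diagonal (fun _ : Fin l => (0 : F)) i j * v i * v j = 0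
  simp

theorem bin_eval (c d : F) (v : Fin 2 → F) : (bin c d).eval v = plane c d (v 0, v 1) := by
  change ∑ i, ∑ j, !![c, 1; 0, d] i j * v i * v j = _
  simp only [Fin.sum_univ_two, plane_apply, Matrix.of_apply, Matrix.cons_val', Matrix.cons_val_zero,
    Matrix.cons_val_one, Matrix.cons_val_fin_one]
  ring

/-- The isometry between the two models of the form `[c, d]`. -/
def binEquiv (c d : F) : (bin c d).toForm.IsometryEquiv (plane c d) where
  __ := LinearEquiv.finTwoArrow F F
  map_app' v := (bin_eval c d v).symm.trans (toForm_apply (bin c d) v).symm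

theorem exists_isometryEquiv_sumList_bin {m : ℕ} (c d : Fin m → F) :
    Nonempty ((sumList (List.ofFn fun i => bin (c i) (d i))).toForm.IsometryEquiv
      (planes c d)) := by
  induction m with
  | zero =>
    refine ⟨{ (0 : (Fin 0 → F) ≃ₗ[F] (Fin 0 → F × F)) with map_app' := fun v => ?_ }⟩
    rw [planes_apply]
    exact (toForm_apply (nil : QF F) v).symm
  | succ m ih =>
    obtain ⟨e⟩ := ih (Fin.tail c) (Fin.tail d)
    have e' := ((orthSumEquiv _ _).trans ((binEquiv (c 0) (d 0)).prod e)).trans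
      (planesConsEquiv (c 0) (d 0) (Fin.tail c) (Fin.tail d))
    rw [Fin.cons_self_tail, Fin.cons_self_tail] at e'
    rw [List.ofFn_succ]
    exact ⟨e'⟩

theorem exists_isometryEquiv_hyp (k : ℕ) :
    Nonempty ((hyp k : QF F).toForm.IsometryEquiv (planes (0 : Fin k → F) 0)) := by
  have h := exists_isometryEquiv_sumList_bin (0 : Fin k → F) 0
  have hlist : (List.ofFn fun i => bin ((0 : Fin k → F) i) ((0 : Fin k → F) i)) =
      List.replicate k hypPlane := List.ofFn_const k hypPlane
  rwa [hlist] at h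

theorem isMetabolic_hyp (k : ℕ) : IsMetabolic (hyp k : QF F).toForm := by
  obtain ⟨e⟩ := exists_isometryEquiv_hyp (F := F) k
  refine (isMetabolic_of_injective
    (g := LinearMap.compLeft (LinearMap.inl F F F) (Fin k)) ?_ ?_ ?_).of_isometryEquiv e.symm
  · exact LinearMap.inl_injective.comp_left
  · simp [planes_apply, plane_apply]
  · simp [finrank_pi_fintype, mul_comm]

theorem toForm_map_apply {E : Type*} [Field E] (f : F →+* E) (q : QF F) (v : Fin q.dim → F) :
    (q.map f).toForm (f ∘ v) = f (q.toForm v) := by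
  refine (toForm_apply (q.map f) (f ∘ v)).trans ?_
  simp only [toForm_apply, eval, map_sum, map_mul]
  rfl

theorem Nonsingular.map {E : Type*} [Field E] (f : F →+* E) {q : QF F} (hq : q.Nonsingular) :
    (q.map f).Nonsingular := by
  rw [nonsingular_iff_det_ne_zero] at hq ⊢
  have h : (q.map f).c + (q.map f).c.transpose = f.mapMatrix (q.c + q.c.transpose) := by
    ext i j
    exact (map_add f _ _).symm
  rw [h]
  exact (f.map_det _).symm.trans_ne ((map_ne_zero f).2 hq)

theorem map_orthSum {E : Type*} [Field E] (f : F →+* E) (q q' : QF F) :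
    (q.orthSum q').map f = (q.map f).orthSum (q'.map f) := by
  have h := Matrix.fromBlocks_map q.c 0 0 q'.c f
  rw [Matrix.map_zero f (map_zero f), Matrix.map_zero f (map_zero f)] at h
  exact congrArg (fun M => mk (q.dim + q'.dim) (Matrix.reindex finSumFinEquiv finSumFinEquiv M)) h

theorem smul_orthSum (a : F) (q q' : QF F) :
    (q.orthSum q').smul a = (q.smul a).orthSum (q'.smul a) := by
  have h := Matrix.fromBlocks_smul a q.c 0 0 q'.c
  rw [smul_zero, smul_zero] at h
  exact congrArg (fun M => mk (q.dim + q'.dim) (Matrix.reindex finSumFinEquiv finSumFinEquiv M)) h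

theorem map_bin {E : Type*} [Field E] (f : F →+* E) (c d : F) :
    (bin c d).map f = bin (f c) (f d) :=
  congrArg (mk 2) <| by
    ext i j
    fin_cases i <;> fin_cases j <;> simp [bin]

theorem Nonsingular.smul {a : F} (ha : a ≠ 0) {q : QF F} (hq : q.Nonsingular) :
    (q.smul a).Nonsingular := by
  have h : (q.smul a).c + (q.smul a).c.transpose = a • (q.c + q.c.transpose) :=
    (smul_add a q.c q.c.transpose).symm
  rw [nonsingular_iff_det_ne_zero] at hq ⊢
  rw [h]
  exact (Matrix.det_smul _ a).trans_ne (mul_ne_zero (pow_ne_zero _ ha) hq)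

variable [CharP F 2]

theorem nonsingular_bin (c d : F) : (bin c d).Nonsingular :=
  .of_isometryEquiv (separatingLeft_plane c d) (binEquiv c d)

theorem nonsingular_hyp (k : ℕ) : (hyp k : QF F).Nonsingular := by
  obtain ⟨e⟩ := exists_isometryEquiv_hyp (F := F) k
  exact .of_isometryEquiv (separatingLeft_planes 0 0) e

theorem hyperbolic_iff_isMetabolic {q : QF F} (hq : q.Nonsingular) :
    q.Hyperbolic ↔ IsMetabolic q.toForm := by
  refine ⟨fun ⟨k, hk⟩ => ?_, fun h => ?_⟩
  · obtain ⟨e⟩ := isometric_iff.1 hk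
    exact (isMetabolic_hyp k).of_isometryEquiv e.symm
  · obtain ⟨m, c, d, ⟨e⟩, hcd⟩ :=
      exists_isometryEquiv_planes (nonsingular_iff_separatingLeft.1 hq)
    obtain ⟨rfl, rfl⟩ := hcd h
    obtain ⟨e'⟩ := exists_isometryEquiv_hyp (F := F) m
    exact ⟨m, isometric_iff.2 ⟨e.trans e'.symm⟩⟩

end ToForm

section WittGroup

variable (F : Type*) [Field F] [CharP F 2]

/-- Two nonsingular forms are Witt equivalent iff their orthogonal sum is metabolic: in
characteristic 2 every form is its own negative. -/
def wittSetoid : Setoid {q : QF F // q.Nonsingular} where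
  r q q' := IsMetabolic (q.1.toForm.prod q'.1.toForm)
  iseqv :=
    { refl := fun _ => isMetabolic_prod_of_isometryEquiv (QuadraticMap.IsometryEquiv.refl _)
      symm := fun h => h.of_isometryEquiv (QuadraticMap.IsometryEquiv.prodComm _ _)
      trans := fun {_ q _} h h' => h.trans (nonsingular_iff_separatingLeft.1 q.2) h' }

/-- The Witt group `W_q(F)` of nonsingular quadratic forms. -/
def WittGroup : Type _ := Quotient (wittSetoid F)

variable {F}

open Classical in
/-- The class of `q` in the Witt group, with junk value the class of the zero form if `q` is
singular. -/
noncomputable def wittClass (q : QF F) : WittGroup F :=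
  Quotient.mk _ (if hq : q.Nonsingular then ⟨q, hq⟩ else ⟨nil, nonsingular_nil⟩)

theorem wittClass_eq_mk {q : QF F} (hq : q.Nonsingular) :
    wittClass q = Quotient.mk (wittSetoid F) ⟨q, hq⟩ := by
  rw [wittClass, dif_pos hq]

theorem wittClass_eq_iff {q q' : QF F} (hq : q.Nonsingular) (hq' : q'.Nonsingular) :
    wittClass q = wittClass q' ↔ IsMetabolic (q.orthSum q').toForm := by
  rw [wittClass_eq_mk hq, wittClass_eq_mk hq']
  exact Quotient.eq.trans (IsMetabolic.congr (orthSumEquiv q q')).symm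

theorem wittClass_eq_of_isometryEquiv {q q' : QF F} (hq : q.Nonsingular) (hq' : q'.Nonsingular)
    (e : q.toForm.IsometryEquiv q'.toForm) : wittClass q = wittClass q' :=
  (wittClass_eq_iff hq hq').2 <|
    (isMetabolic_prod_of_isometryEquiv e).of_isometryEquiv (orthSumEquiv q q').symm

theorem wittClass_eq_wittClass_nil_iff {q : QF F} (hq : q.Nonsingular) :
    wittClass q = wittClass nil ↔ IsMetabolic q.toForm := by
  rw [eq_comm, wittClass_eq_iff nonsingular_nil hq, IsMetabolic.congr (orthSumEquiv nil q)]
  exact ⟨fun h => isMetabolic_nil.of_prod (nonsingular_iff_separatingLeft.1 nonsingular_nil) h,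
    fun h => isMetabolic_nil.prod h⟩

namespace WittGroup

theorem exists_wittClass_eq (x : WittGroup F) : ∃ q : QF F, q.Nonsingular ∧ wittClass q = x := by
  obtain ⟨⟨q, hq⟩, rfl⟩ := Quotient.exists_rep x
  exact ⟨q, hq, wittClass_eq_mk hq⟩

noncomputable instance : Zero (WittGroup F) := ⟨wittClass nil⟩

instance : Neg (WittGroup F) := ⟨id⟩

noncomputable instance : Add (WittGroup F) where
  add := Quotient.map₂ (fun q q' => ⟨q.1.orthSum q'.1, q.2.orthSum q'.2⟩)
    fun _ _ h _ _ h' => (h.prod h').of_isometryEquiv <|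
      (QuadraticMap.IsometryEquiv.prodProdProdComm _ _ _ _).trans
        ((orthSumEquiv _ _).prod (orthSumEquiv _ _)).symm

end WittGroup

theorem wittClass_eq_zero_iff {q : QF F} (hq : q.Nonsingular) :
    wittClass q = 0 ↔ IsMetabolic q.toForm :=
  wittClass_eq_wittClass_nil_iff hq

theorem wittClass_orthSum {q q' : QF F} (hq : q.Nonsingular) (hq' : q'.Nonsingular) :
    wittClass (q.orthSum q') = wittClass q + wittClass q' := by
  rw [wittClass_eq_mk hq, wittClass_eq_mk hq', wittClass_eq_mk (hq.orthSum hq')]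
  rfl

namespace WittGroup

protected theorem add_self (x : WittGroup F) : x + x = 0 := by
  obtain ⟨q, hq, rfl⟩ := exists_wittClass_eq x
  rw [← wittClass_orthSum hq hq, wittClass_eq_zero_iff (hq.orthSum hq), ← wittClass_eq_iff hq hq]

protected theorem add_comm (x y : WittGroup F) : x + y = y + x := by
  obtain ⟨q, hq, rfl⟩ := exists_wittClass_eq x
  obtain ⟨q', hq', rfl⟩ := exists_wittClass_eq y
  rw [← wittClass_orthSum hq hq', ← wittClass_orthSum hq' hq]
  exact wittClass_eq_of_isometryEquiv (hq.orthSum hq') (hq'.orthSum hq)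
    (orthSumComm q q')

protected theorem add_assoc (x y z : WittGroup F) : x + y + z = x + (y + z) := by
  obtain ⟨q, hq, rfl⟩ := exists_wittClass_eq x
  obtain ⟨q', hq', rfl⟩ := exists_wittClass_eq y
  obtain ⟨q'', hq'', rfl⟩ := exists_wittClass_eq z
  rw [← wittClass_orthSum hq hq', ← wittClass_orthSum hq' hq'',
    ← wittClass_orthSum (hq.orthSum hq') hq'', ← wittClass_orthSum hq (hq'.orthSum hq'')]
  exact wittClass_eq_of_isometryEquiv ((hq.orthSum hq').orthSum hq'')
    (hq.orthSum (hq'.orthSum hq'')) (orthSumAssoc q q' q'')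

protected theorem zero_add (x : WittGroup F) : 0 + x = x := by
  obtain ⟨q, hq, rfl⟩ := exists_wittClass_eq x
  refine (wittClass_orthSum nonsingular_nil hq).symm.trans ?_
  rw [wittClass_eq_iff (nonsingular_nil.orthSum hq) hq]
  have hqq := (wittClass_eq_iff hq hq).1 rfl
  exact (isMetabolic_nil.prod hqq).of_isometryEquiv
    ((orthSumEquiv nil (q.orthSum q)).symm.trans (orthSumAssoc nil q q).symm)

noncomputable instance : AddCommGroup (WittGroup F) where
  __ := AddGroup.ofLeftAxioms WittGroup.add_assoc WittGroup.zero_add WittGroup.add_self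
  add_comm := WittGroup.add_comm

protected theorem neg_eq_self (x : WittGroup F) : -x = x :=
  rfl

theorem add_eq_zero_iff_eq {x y : WittGroup F} : x + y = 0 ↔ x = y :=
  add_eq_zero_iff_eq_neg

end WittGroup

end WittGroup

section Functoriality

variable {F E : Type*} [Field F] [CharP F 2] [Field E] [CharP E 2]

/-- The homomorphism of Witt groups induced by an additive operation on quadratic forms. -/
noncomputable def WittGroup.map (T : QF F → QF E)
    (hT : ∀ q : QF F, q.Nonsingular → (T q).Nonsingular)
    (hadd : ∀ q q' : QF F, T (q.orthSum q') = (T q).orthSum (T q'))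
    (hmet : ∀ q : QF F, IsMetabolic q.toForm → IsMetabolic (T q).toForm) :
    WittGroup F →+ WittGroup E :=
  AddMonoidHom.mk' (Quotient.lift (fun q => wittClass (T q.1)) fun q q' h => by
      rw [wittClass_eq_iff (hT _ q.2) (hT _ q'.2), ← hadd]
      exact hmet _ (h.of_isometryEquiv (orthSumEquiv q.1 q'.1).symm))
    (Quotient.ind₂ fun q q' => by
      change wittClass (T (q.1.orthSum q'.1)) = wittClass (T q.1) + wittClass (T q'.1)
      rw [hadd, wittClass_orthSum (hT _ q.2) (hT _ q'.2)])

theorem WittGroup.map_wittClass {T : QF F → QF E} (hT hadd hmet) {q : QF F} (hq : q.Nonsingular) :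
    WittGroup.map T hT hadd hmet (wittClass q) = wittClass (T q) := by
  rw [wittClass_eq_mk hq]
  rfl

/-- The action `x ↦ a x` of a scalar on the Witt group. -/
noncomputable def scale (a : Fˣ) : WittGroup F →+ WittGroup F :=
  WittGroup.map (smul (a : F)) (fun _ hq => hq.smul a.ne_zero) (smul_orthSum (a : F))
    fun q ⟨S, hS, hSd⟩ =>
      ⟨S, fun v hv => (toForm_smul_apply (a : F) q v).trans (by rw [hS v hv, mul_zero]), hSd⟩

theorem scale_wittClass (a : Fˣ) {q : QF F} (hq : q.Nonsingular) :
    scale a (wittClass q) = wittClass (q.smul (a : F)) :=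
  WittGroup.map_wittClass _ _ _ hq

variable (F E) in
/-- Extension of scalars `W_q(F) → W_q(E)`. -/
noncomputable def restrict [Algebra F E] : WittGroup F →+ WittGroup E :=
  WittGroup.map (map (algebraMap F E)) (fun _ hq => hq.map _) (map_orthSum _)
    fun q h => h.baseChange (toForm_map_apply (algebraMap F E) q)

theorem restrict_wittClass [Algebra F E] {q : QF F} (hq : q.Nonsingular) :
    restrict F E (wittClass q) = wittClass (q.map (algebraMap F E)) :=
  WittGroup.map_wittClass _ _ _ hq

theorem wittClass_sumList {l : List (QF F)} (h : ∀ q ∈ l, q.Nonsingular) :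
    wittClass (sumList l) = (l.map wittClass).sum := by
  induction l with
  | nil => rfl
  | cons q l ih =>
    rw [List.forall_mem_cons] at h
    rw [List.map_cons, List.sum_cons, ← ih h.2, ← wittClass_orthSum h.1 (nonsingular_sumList h.2)]
    rfl

end Functoriality

section PlaneClass

variable {F : Type*} [Field F] [CharP F 2]

/-- The class of `[c, d]` in the Witt group. -/
noncomputable def planeClass (c d : F) : WittGroup F := wittClass (bin c d)

theorem wittClass_sumList_bin {m : ℕ} (c d : Fin m → F) :
    wittClass (sumList (List.ofFn fun i => bin (c i) (d i))) = ∑ i, planeClass (c i) (d i) := by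
  rw [wittClass_sumList (List.forall_mem_ofFn_iff.2 fun i => nonsingular_bin (c i) (d i)),
    List.map_ofFn, List.sum_ofFn]
  rfl

theorem nonsingular_sumList_bin {m : ℕ} (c d : Fin m → F) :
    (sumList (List.ofFn fun i => bin (c i) (d i))).Nonsingular :=
  nonsingular_sumList (List.forall_mem_ofFn_iff.2 fun i => nonsingular_bin (c i) (d i))

theorem sum_planeClass_eq_zero_iff {m : ℕ} (c d : Fin m → F) :
    ∑ i, planeClass (c i) (d i) = 0 ↔ IsMetabolic (planes c d) := by
  obtain ⟨e⟩ := exists_isometryEquiv_sumList_bin c d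
  rw [← wittClass_sumList_bin, wittClass_eq_zero_iff (nonsingular_sumList_bin c d),
    IsMetabolic.congr e]

theorem planeClass_eq_zero_iff (c d : F) : planeClass c d = 0 ↔ IsMetabolic (plane c d) := by
  rw [planeClass, wittClass_eq_zero_iff (nonsingular_bin c d), IsMetabolic.congr (binEquiv c d)]

theorem exists_eq_sum_planeClass (x : WittGroup F) :
    ∃ (m : ℕ) (c d : Fin m → F), x = ∑ i, planeClass (c i) (d i) := by
  obtain ⟨q, hq, rfl⟩ := x.exists_wittClass_eq
  obtain ⟨m, c, d, ⟨e⟩, -⟩ := exists_isometryEquiv_planes (nonsingular_iff_separatingLeft.1 hq)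
  obtain ⟨e'⟩ := exists_isometryEquiv_sumList_bin c d
  refine ⟨m, c, d, ?_⟩
  rw [← wittClass_sumList_bin]
  exact wittClass_eq_of_isometryEquiv hq (nonsingular_sumList_bin c d) (e.trans e'.symm)

theorem planeClass_mul_sq (c d r : F) : planeClass (c * r ^ 2) d = planeClass c (d * r ^ 2) := by
  rw [← WittGroup.add_eq_zero_iff_eq]
  have h : IsMetabolic (planes ![c * r ^ 2, c] ![d, d * r ^ 2]) := by
    refine isMetabolic_of_injective (g := LinearMap.pi ![LinearMap.id.prodMap (r • LinearMap.id),
      (r • LinearMap.id).prodMap LinearMap.id]) (fun v w hvw => Prod.ext ?_ ?_) (fun v => ?_) ?_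
    · simpa using congrArg Prod.fst (congrFun hvw 0)
    · simpa using congrArg Prod.snd (congrFun hvw 1)
    · rw [planes_apply, Fin.sum_univ_two]
      change plane (c * r ^ 2) d (v.1, r * v.2) + plane c (d * r ^ 2) (r * v.1, v.2) = 0
      simp only [plane_apply]
      linear_combination (c * r ^ 2 * v.1 ^ 2 + r * v.1 * v.2 + d * r ^ 2 * v.2 ^ 2) *
        CharTwo.two_eq_zero (R := F)
    · simp [finrank_pi_fintype]
  simpa using (sum_planeClass_eq_zero_iff _ _).2 h

theorem planeClass_add_right (c d d' : F) :
    planeClass c (d + d') = planeClass c d + planeClass c d' := by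
  rw [← WittGroup.add_eq_zero_iff_eq]
  have h : IsMetabolic (planes ![c, c, c] ![d + d', d, d']) := by
    let g : F × F × F →ₗ[F] Fin 3 → F × F :=
      { toFun := fun v => ![(v.1 + v.2.1, v.2.2), (v.1, v.2.2), (v.2.1, v.2.2)]
        map_add' := fun v w => by ext i <;> fin_cases i <;> simp [add_add_add_comm]
        map_smul' := fun r v => by ext i <;> fin_cases i <;> simp [mul_add] }
    refine isMetabolic_of_injective (g := g) (fun v w hvw => ?_) (fun v => ?_) ?_
    · have h₁ : (v.1, v.2.2) = (w.1, w.2.2) := congrFun hvw 1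
      have h₂ : (v.2.1, v.2.2) = (w.2.1, w.2.2) := congrFun hvw 2
      rw [Prod.mk_inj] at h₁ h₂
      exact Prod.ext h₁.1 (Prod.ext h₂.1 h₂.2)
    · rw [planes_apply, Fin.sum_univ_three]
      change plane c (d + d') (v.1 + v.2.1, v.2.2) + plane c d (v.1, v.2.2) +
        plane c d' (v.2.1, v.2.2) = 0
      simp only [plane_apply]
      linear_combination (c * (v.1 ^ 2 + v.1 * v.2.1 + v.2.1 ^ 2) + (v.1 + v.2.1) * v.2.2 +
        (d + d') * v.2.2 ^ 2) * CharTwo.two_eq_zero (R := F)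
    · simp [finrank_pi_fintype]
  simpa [Fin.sum_univ_three, add_assoc] using (sum_planeClass_eq_zero_iff _ _).2 h

theorem planeClass_comm (c d : F) : planeClass c d = planeClass d c := by
  let e : (plane c d).IsometryEquiv (plane d c) :=
    { LinearEquiv.prodComm F F F with
      map_app' := fun v => by
        change plane d c (v.2, v.1) = plane c d v
        simp only [plane_apply]
        ring }
  exact wittClass_eq_of_isometryEquiv (nonsingular_bin c d) (nonsingular_bin d c)
    (((binEquiv c d).trans e).trans (binEquiv d c).symm)

theorem planeClass_self_add_mul_sq (c d : F) : planeClass c (d + c * d ^ 2) = 0 := by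
  rw [planeClass_eq_zero_iff]
  refine isMetabolic_plane (v := (d, 1)) (by simp) ?_
  rw [plane_apply]
  linear_combination (c * d ^ 2 + d) * CharTwo.two_eq_zero (R := F)

theorem scale_planeClass (a : Fˣ) (c d : F) :
    scale a (planeClass c d) = planeClass (a * c) (d / a) := by
  let e : ((bin c d).smul (a : F)).toForm.IsometryEquiv (plane (a * c) (d / a)) :=
    { (binEquiv c d).toLinearEquiv.trans
        ((LinearEquiv.refl F F).prodCongr (LinearEquiv.smulOfUnit a)) with
      map_app' := fun v => (plane_mul_div_apply c d a.ne_zero _).trans <|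
        (congrArg ((a : F) * ·) ((binEquiv c d).map_app v)).trans
          (toForm_smul_apply (a : F) (bin c d) v).symm }
  exact (scale_wittClass a (nonsingular_bin c d)).trans <| wittClass_eq_of_isometryEquiv
    ((nonsingular_bin c d).smul a.ne_zero) (nonsingular_bin _ _) (e.trans (binEquiv _ _).symm)

theorem restrict_planeClass {E : Type*} [Field E] [CharP E 2] [Algebra F E] (c d : F) :
    restrict F E (planeClass c d) = planeClass (algebraMap F E c) (algebraMap F E d) := by
  rw [planeClass, restrict_wittClass (nonsingular_bin c d), map_bin, planeClass]

end PlaneClass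

section WittEquiv

variable {F : Type*} [Field F] [CharP F 2] {q q' : QF F}

theorem wittClass_orthSum_hyp (hq : q.Nonsingular) (k : ℕ) :
    wittClass (q.orthSum (hyp k)) = wittClass q := by
  rw [wittClass_orthSum hq (nonsingular_hyp k),
    (wittClass_eq_zero_iff (nonsingular_hyp k)).2 (isMetabolic_hyp k), add_zero]

theorem wittClass_eq_of_wittEquiv (hq : q.Nonsingular) (hq' : q'.Nonsingular)
    (h : WittEquiv q q') : wittClass q = wittClass q' := by
  obtain ⟨k, k', l, l', h⟩ := h
  obtain ⟨e⟩ := isometric_iff.1 h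
  have hqk := hq.orthSum (nonsingular_hyp k)
  have hqk' := hq'.orthSum (nonsingular_hyp k')
  have e' := ((((orthSumAssoc q _ _).trans e).trans (orthSumAssoc q' _ _).symm).trans
    (orthSumEquiv _ _))
  have e'' := (orthSumEquiv _ _).symm.trans e'
  rw [toForm_zeros, toForm_zeros] at e''
  rw [← wittClass_orthSum_hyp hq k, ← wittClass_orthSum_hyp hq' k', wittClass_eq_iff hqk hqk']
  exact (isMetabolic_prod_of_isometryEquiv_prod_zero (nonsingular_iff_separatingLeft.1 hqk)
    (nonsingular_iff_separatingLeft.1 hqk') e'').of_isometryEquiv (orthSumEquiv _ _).symm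

/-- If `q' ⊥ q'` and `q ⊥ q'` are hyperbolic, adding them to `q` and `q'` respectively gives
isometric forms. -/
theorem wittEquiv_of_wittClass_eq (hq : q.Nonsingular) (hq' : q'.Nonsingular)
    (h : wittClass q = wittClass q') : WittEquiv q q' := by
  rw [wittClass_eq_iff hq hq', ← hyperbolic_iff_isMetabolic (hq.orthSum hq')] at h
  have h' := (wittClass_eq_iff hq' hq').1 rfl
  rw [← hyperbolic_iff_isMetabolic (hq'.orthSum hq')] at h'
  obtain ⟨k, hk⟩ := h
  obtain ⟨k', hk'⟩ := h'
  obtain ⟨e⟩ := isometric_iff.1 hk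
  obtain ⟨e'⟩ := isometric_iff.1 hk'
  have f : (q.orthSum (hyp k')).toForm.IsometryEquiv (q'.orthSum (hyp k)).toForm :=
    ((orthSumCongr (.refl _) e'.symm).trans (orthSumAssoc q q' q').symm).trans
      ((orthSumComm _ _).trans (orthSumCongr (.refl _) e))
  exact ⟨k', k, 0, 0, isometric_iff.2 ⟨((orthSumAssoc _ _ _).symm.trans
    (orthSumCongr f (.refl _))).trans (orthSumAssoc _ _ _)⟩⟩

theorem wittEquiv_iff_wittClass_eq (hq : q.Nonsingular) (hq' : q'.Nonsingular) :
    WittEquiv q q' ↔ wittClass q = wittClass q' :=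
  ⟨wittClass_eq_of_wittEquiv hq hq', wittEquiv_of_wittClass_eq hq hq'⟩

end WittEquiv

section Relations

variable {F : Type*} [Field F] [CharP F 2]

theorem planeClass_add_left (c c' d : F) :
    planeClass (c + c') d = planeClass c d + planeClass c' d := by
  simp only [planeClass_comm _ d, planeClass_add_right]

theorem planeClass_mul_sq_self (c d : F) : planeClass c (c * d ^ 2) = planeClass c d := by
  rw [eq_comm, ← WittGroup.add_eq_zero_iff_eq, ← planeClass_add_right, planeClass_self_add_mul_sq]

theorem WittGroup.hom_ext {W : Type*} [AddCommGroup W] {f g : WittGroup F →+ W}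
    (h : ∀ c d, f (planeClass c d) = g (planeClass c d)) : f = g := by
  ext x
  obtain ⟨m, c, d, rfl⟩ := exists_eq_sum_planeClass x
  simp only [map_sum, h]

end Relations

section Symbol

variable {F K : Type*} [Field F] [Field K] [Algebra F K] {φ : K →+* F}
  {ι : Type*} {a : ι → F} {x : ι → K}

theorem apply_algebraMap_eq_sq (hφ : ∀ t, algebraMap F K (φ t) = t ^ 2) (c : F) :
    φ (algebraMap F K c) = c ^ 2 :=
  (algebraMap F K).injective (by rw [hφ, map_pow])

theorem exists_ringHom_algebraMap_eq_sq [CharP K 2] (hx : ∀ i, x i ^ 2 = algebraMap F K (a i))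
    (hgen : Algebra.adjoin F (Set.range x) = ⊤) :
    ∃ φ : K →+* F, ∀ t, algebraMap F K (φ t) = t ^ 2 := by
  have hmem (t : K) : frobenius K 2 t ∈ (algebraMap F K).fieldRange := by
    have ht : t ∈ Algebra.adjoin F (Set.range x) := hgen ▸ Algebra.mem_top
    induction ht using Algebra.adjoin_induction with
    | mem t ht => obtain ⟨i, rfl⟩ := ht; exact ⟨a i, (hx i).symm⟩
    | algebraMap r => exact ⟨r ^ 2, map_pow _ r 2⟩
    | add s t _ _ hs ht => rw [map_add]; exact add_mem hs ht
    | mul s t _ _ hs ht => rw [map_mul]; exact mul_mem hs ht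
  let e := (algebraMap F K).rangeRestrictFieldEquiv
  refine ⟨(e.symm : _ →+* F).comp ((frobenius K 2).codRestrict _ hmem), fun t => ?_⟩
  exact (algebraMap F K).rangeRestrictFieldEquiv_apply_symm_apply ⟨_, hmem t⟩

variable [CharP F 2] {W : Type*} [AddCommGroup W]

/-- A homomorphism `π` from the Witt group of `F` that does not distinguish `[c φ(t), d]` from
`[c, φ(t) d]` extends the symbol `(c, d) ↦ π [c, d]` from `d ∈ F` to `d ∈ K`. -/
noncomputable def MixedSymbol.ofWittGroup (hφ : ∀ t, algebraMap F K (φ t) = t ^ 2)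
    (π : WittGroup F →+ W)
    (hπ : ∀ t c d, π (planeClass (c * φ t) d) = π (planeClass c (φ t * d))) :
    MixedSymbol φ W where
  toHom := AddMonoidHom.mk' (fun c => AddMonoidHom.mk' (fun d => π (planeClass c (c * φ d)))
      fun d d' => by rw [map_add, mul_add, planeClass_add_right, map_add]) fun c c' => by
    ext d
    have hcross : π (planeClass c (c' * φ d)) + π (planeClass c' (c * φ d)) = 0 := by
      rw [mul_comm c', ← hπ, planeClass_comm, ← map_add, WittGroup.add_self, map_zero]
    simp only [AddMonoidHom.mk'_apply, AddMonoidHom.add_apply, add_mul, planeClass_add_left,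
      planeClass_add_right, map_add]
    rw [add_add_add_comm, add_comm (π (planeClass c' _)), add_add_add_comm, ← add_assoc,
      add_assoc _ (π (planeClass c (c' * φ d))), hcross, add_zero]
  toHom_mul_apply c r d := by
    simp only [AddMonoidHom.mk'_apply, hπ, map_mul, map_pow]
    ring_nf
  toHom_sq_mul_comm c r c' := by
    simp only [AddMonoidHom.mk'_apply, map_mul, map_pow, apply_algebraMap_eq_sq hφ]
    rw [← mul_pow, ← mul_pow, planeClass_mul_sq_self, planeClass_mul_sq_self, ← hπ,
      planeClass_comm, mul_comm]
  toHom_add_mul_sq c r := by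
    rw [AddMonoidHom.mk'_apply, AddMonoidHom.mk'_apply, map_add, map_mul, map_pow,
      apply_algebraMap_eq_sq hφ]
    rw [← mul_pow, mul_add, planeClass_self_add_mul_sq, map_zero]

theorem MixedSymbol.ofWittGroup_apply_algebraMap (hφ : ∀ t, algebraMap F K (φ t) = t ^ 2)
    (π : WittGroup F →+ W)
    (hπ : ∀ t c d, π (planeClass (c * φ t) d) = π (planeClass c (φ t * d))) (c d : F) :
    (ofWittGroup hφ π hπ).toHom c (algebraMap F K d) = π (planeClass c d) := by
  simp only [ofWittGroup, AddMonoidHom.mk'_apply, apply_algebraMap_eq_sq hφ, planeClass_mul_sq_self]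

theorem map_planeClass_mul_apply (hφ : ∀ t, algebraMap F K (φ t) = t ^ 2)
    (hx : ∀ i, x i ^ 2 = algebraMap F K (a i))
    (hgen : Algebra.adjoin F (Set.range x) = ⊤) (π : WittGroup F →+ W)
    (hπ : ∀ i c d, π (planeClass (c * a i) d) = π (planeClass c (a i * d))) (t : K) (c d : F) :
    π (planeClass (c * φ t) d) = π (planeClass c (φ t * d)) := by
  have ht : t ∈ Algebra.adjoin F (Set.range x) := hgen ▸ Algebra.mem_top
  induction ht using Algebra.adjoin_induction generalizing c d with
  | mem t ht =>
    obtain ⟨i, rfl⟩ := ht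
    have hφx : φ (x i) = a i := (algebraMap F K).injective (by rw [hφ, hx])
    rw [hφx, hπ]
  | algebraMap r => rw [apply_algebraMap_eq_sq hφ, planeClass_mul_sq, mul_comm d]
  | add s t _ _ hs ht =>
    rw [map_add, mul_add, add_mul, planeClass_add_left, planeClass_add_right, map_add, map_add,
      hs, ht]
  | mul s t _ _ hs ht => rw [map_mul, ← mul_assoc, ht, hs, ← mul_assoc]

end Symbol

section Kernel

variable {F K L : Type*} [Field F] [Field K] [Field L] [Algebra F K] [Algebra K L] [Algebra F L]
  [IsScalarTower F K L] [CharP F 2] [CharP L 2] {b : F} {β : L}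

theorem map_eq_zero_of_restrict_eq_zero {W ι : Type*} [AddCommGroup W] {a : ι → F} {x : ι → K}
    (hx : ∀ i, x i ^ 2 = algebraMap F K (a i)) (hgenK : Algebra.adjoin F (Set.range x) = ⊤)
    (hβ : β ^ 2 + β + algebraMap F L b = 0) (hgenL : Algebra.adjoin K {β} = ⊤)
    (π : WittGroup F →+ W)
    (hπa : ∀ i c d, π (planeClass (c * a i) d) = π (planeClass c (a i * d)))
    (hπb : ∀ c, c ≠ 0 → π (planeClass c (b / c)) = 0) {y : WittGroup F}
    (hy : restrict F L y = 0) : π y = 0 := by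
  have : CharP K 2 := charP_of_injective_algebraMap (algebraMap F K).injective 2
  obtain ⟨φ, hφ⟩ := exists_ringHom_algebraMap_eq_sq hx hgenK
  let D := MixedSymbol.ofWittGroup hφ π (map_planeClass_mul_apply hφ hx hgenK π hπa)
  have hD (c d : F) : D.toHom c (algebraMap F K d) = π (planeClass c d) :=
    MixedSymbol.ofWittGroup_apply_algebraMap hφ π _ c d
  obtain ⟨m, c, d, rfl⟩ := exists_eq_sum_planeClass y
  simp only [map_sum, restrict_planeClass] at hy
  rw [sum_planeClass_eq_zero_iff] at hy
  simp only [map_sum, ← hD]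
  rw [IsScalarTower.algebraMap_eq F K L] at hβ
  refine D.sum_eq_zero hφ (fun c hc => by rw [hD, hπb c hc]) hβ hgenL c
    (algebraMap F K ∘ d) ?_
  convert hy using 2 <;> ext i <;> exact (IsScalarTower.algebraMap_apply F K L _).symm

theorem restrict_scale_planeClass_one (hβ : β ^ 2 + β + algebraMap F L b = 0) (c : Fˣ) :
    restrict F L (scale c (planeClass 1 b)) = 0 := by
  rw [scale_planeClass, mul_one, restrict_planeClass, planeClass_eq_zero_iff]
  exact isMetabolic_plane_map hβ (.inr ⟨c.ne_zero, rfl⟩)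

theorem restrict_add_scale {c : Fˣ} (hc : IsSquare (algebraMap F L c)) (y : WittGroup F) :
    restrict F L (y + scale c y) = 0 := by
  obtain ⟨s, hs⟩ := hc
  have hs0 : s ≠ 0 := by rintro rfl; simp at hs
  have hscale : (restrict F L).comp (scale c) = restrict F L := WittGroup.hom_ext fun e d => by
    rw [AddMonoidHom.comp_apply, scale_planeClass, restrict_planeClass, restrict_planeClass,
      map_mul, map_div₀, hs, ← sq, mul_comm, planeClass_mul_sq,
      div_mul_cancel₀ _ (pow_ne_zero 2 hs0)]
  rw [map_add, ← AddMonoidHom.comp_apply, hscale, WittGroup.add_self]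

end Kernel

section Elements

variable {F : Type*} [Field F]

theorem mem_iSup_range_iff {ι G H : Type*} [Fintype ι] [AddCommGroup G] [AddCommGroup H]
    {f : ι → G →+ H} {y : H} : y ∈ ⨆ i, (f i).range ↔ ∃ z : ι → G, ∑ i, f i (z i) = y := by
  have hcomm : Pairwise fun i j => ∀ u v, AddCommute (f i u) (f j v) :=
    fun _ _ _ _ _ => AddCommute.all _ _
  rw [← AddMonoidHom.noncommPiCoprod_range (hcomm := hcomm)]
  exact exists_congr fun z => by
    rw [AddMonoidHom.noncommPiCoprod_apply, Finset.noncommSum_eq_sum]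

variable {n : ℕ}

/-- The form `(⊥ⱼ cⱼ[1,b]) ⊥ (⊥ᵢ ⟨1,aᵢ⟩_b ⊗ τᵢ)` built from the scalars `bs = [c₁, c₂, …]` and the
forms `τᵢ`, the typical representative of `W(F) ⊗ [1,b] + Σᵢ ⟨1,aᵢ⟩_b ⊗ W_q(F)`. -/
def kernelForm (a : Fin n → F) (b : F) (bs : List F) (τ : Fin n → QF F) : QF F :=
  (sumList (bs.map fun c => smul c (bin 1 b))).orthSum
    (sumList (List.ofFn fun i => (τ i).orthSum (smul (a i) (τ i))))

variable {a : Fin n → Fˣ} {b : F} {bs : List Fˣ} {τ : Fin n → QF F}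

theorem nonsingular_orthSum_smul_of_mem_ofFn (hτ : ∀ i, (τ i).Nonsingular) {q : QF F}
    (hq : q ∈ List.ofFn fun i => (τ i).orthSum (smul (a i : F) (τ i))) : q.Nonsingular := by
  obtain ⟨i, rfl⟩ := List.mem_ofFn.1 hq
  exact (hτ i).orthSum ((hτ i).smul (a i).ne_zero)

variable [CharP F 2]

theorem nonsingular_smul_bin_of_mem_map {q : QF F}
    (hq : q ∈ bs.map fun c : Fˣ => smul (c : F) (bin 1 b)) : q.Nonsingular := by
  obtain ⟨c, -, rfl⟩ := List.mem_map.1 hq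
  exact (nonsingular_bin 1 b).smul c.ne_zero

theorem nonsingular_kernelForm (hτ : ∀ i, (τ i).Nonsingular) :
    (kernelForm (fun i => (a i : F)) b (bs.map Units.val) τ).Nonsingular := by
  rw [kernelForm, List.map_map]
  exact (nonsingular_sumList fun _ => nonsingular_smul_bin_of_mem_map).orthSum
    (nonsingular_sumList fun _ => nonsingular_orthSum_smul_of_mem_ofFn hτ)

theorem wittClass_kernelForm (hτ : ∀ i, (τ i).Nonsingular) :
    wittClass (kernelForm (fun i => (a i : F)) b (bs.map Units.val) τ) =
      (bs.map fun c => scale c (planeClass 1 b)).sum +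
        ∑ i, (wittClass (τ i) + scale (a i) (wittClass (τ i))) := by
  have hbs : ∀ q ∈ bs.map ((fun c => smul c (bin 1 b)) ∘ Units.val), q.Nonsingular :=
    fun _ => nonsingular_smul_bin_of_mem_map
  have haτ : ∀ q ∈ List.ofFn fun i => (τ i).orthSum (smul (a i : F) (τ i)), q.Nonsingular :=
    fun _ => nonsingular_orthSum_smul_of_mem_ofFn hτ
  rw [kernelForm, List.map_map,
    wittClass_orthSum (nonsingular_sumList hbs) (nonsingular_sumList haτ),
    wittClass_sumList hbs, wittClass_sumList haτ, List.map_map, List.map_ofFn, List.sum_ofFn]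
  congr 1
  · simp only [planeClass, scale_wittClass _ (nonsingular_bin 1 b)]
    rfl
  · refine Finset.sum_congr rfl fun i _ => ?_
    rw [Function.comp_apply, wittClass_orthSum (hτ i) ((hτ i).smul (a i).ne_zero),
      ← scale_wittClass (a i) (hτ i)]

theorem WittGroup.mem_closure_range_iff {ι : Type*} {f : ι → WittGroup F} {y : WittGroup F} :
    y ∈ AddSubgroup.closure (Set.range f) ↔ ∃ l : List ι, (l.map f).sum = y := by
  constructor
  · intro hy
    induction hy using AddSubgroup.closure_induction with
    | mem _ h =>
      obtain ⟨i, rfl⟩ := h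
      exact ⟨[i], List.sum_singleton⟩
    | zero => exact ⟨[], rfl⟩
    | add _ _ _ _ h h' =>
      obtain ⟨⟨l, rfl⟩, l', rfl⟩ := h, h'
      exact ⟨l ++ l', by rw [List.map_append, List.sum_append]⟩
    | neg _ _ h => exact h
  · rintro ⟨l, rfl⟩
    refine AddSubgroup.list_sum_mem _ fun y hy => ?_
    obtain ⟨i, -, rfl⟩ := List.mem_map.1 hy
    exact AddSubgroup.subset_closure ⟨i, rfl⟩

theorem wittClass_mem_closure_sup_iSup_iff {q : QF F} (hq : q.Nonsingular) :
    wittClass q ∈ AddSubgroup.closure (Set.range fun c : Fˣ => scale c (planeClass 1 b)) ⊔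
        ⨆ i, (AddMonoidHom.id _ + scale (a i)).range ↔
      ∃ (bs : List F) (τ : Fin n → QF F), (∀ c ∈ bs, c ≠ 0) ∧ (∀ i, (τ i).Nonsingular) ∧
        WittEquiv q (kernelForm (fun i => (a i : F)) b bs τ) := by
  simp only [AddSubgroup.mem_sup, WittGroup.mem_closure_range_iff, mem_iSup_range_iff]
  constructor
  · rintro ⟨_, ⟨bs, rfl⟩, _, ⟨z, rfl⟩, h⟩
    choose τ hτ hz using fun i => WittGroup.exists_wittClass_eq (z i)
    obtain rfl := funext hz
    refine ⟨bs.map Units.val, τ, fun c hc => ?_, hτ,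
      (wittEquiv_iff_wittClass_eq hq (nonsingular_kernelForm hτ)).2 ?_⟩
    · obtain ⟨u, -, rfl⟩ := List.mem_map.1 hc
      exact u.ne_zero
    · rw [wittClass_kernelForm hτ, ← h]
      rfl
  · rintro ⟨bs, τ, hbs, hτ, h⟩
    lift bs to List Fˣ using fun c hc => (hbs c hc).isUnit
    exact ⟨_, ⟨bs, rfl⟩, _, ⟨fun i => wittClass (τ i), rfl⟩, (wittClass_kernelForm hτ).symm.trans
      ((wittEquiv_iff_wittClass_eq hq (nonsingular_kernelForm hτ)).1 h).symm⟩

theorem hyperbolic_map_iff_wittClass_mem_ker {L : Type*} [Field L] [CharP L 2] [Algebra F L]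
    {q : QF F} (hq : q.Nonsingular) :
    Hyperbolic (q.map (algebraMap F L)) ↔ wittClass q ∈ (restrict F L).ker := by
  rw [AddMonoidHom.mem_ker, restrict_wittClass hq, wittClass_eq_zero_iff (hq.map _),
    hyperbolic_iff_isMetabolic (hq.map _)]

end Elements

end QF

open QF in
theorem wittKernel_multiquadratic_sep_degree_two_general
    {F K L ι : Type*} [Field F] [Field K] [Field L] [Algebra F K] [Algebra K L] [Algebra F L]
    [IsScalarTower F K L] [CharP F 2] [CharP L 2] {a : ι → Fˣ} {x : ι → K} {b : F} {β : L}
    (hx : ∀ i, x i ^ 2 = algebraMap F K (a i)) (hgenK : Algebra.adjoin F (Set.range x) = ⊤)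
    (hβ : β ^ 2 + β + algebraMap F L b = 0) (hgenL : Algebra.adjoin K {β} = ⊤) :
    (restrict F L).ker =
      AddSubgroup.closure (Set.range fun c : Fˣ => scale c (planeClass 1 b)) ⊔
        ⨆ i, (AddMonoidHom.id _ + scale (a i)).range := by
  apply le_antisymm
  · intro y hy
    rw [← QuotientAddGroup.eq_zero_iff]
    refine map_eq_zero_of_restrict_eq_zero hx hgenK hβ hgenL (QuotientAddGroup.mk' _)
      (fun i c d => ?_) (fun c hc => ?_) hy
    · refine QuotientAddGroup.eq.2 (AddSubgroup.mem_sup_right (AddSubgroup.mem_iSup_of_mem i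
        ⟨planeClass c (a i * d), ?_⟩))
      rw [AddMonoidHom.add_apply, AddMonoidHom.id_apply, scale_planeClass,
        mul_div_cancel_left₀ _ (a i).ne_zero, mul_comm c, add_comm,
        WittGroup.neg_eq_self]
    · lift c to Fˣ using hc.isUnit
      refine (QuotientAddGroup.eq_zero_iff _).2 (AddSubgroup.mem_sup_left
        (AddSubgroup.subset_closure ⟨c, ?_⟩))
      simp only [scale_planeClass, mul_one]
  · refine sup_le ((AddSubgroup.closure_le _).2 ?_) (iSup_le fun i => ?_)
    · rintro _ ⟨c, rfl⟩
      exact restrict_scale_planeClass_one hβ c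
    · rintro _ ⟨y, rfl⟩
      exact restrict_add_scale ⟨algebraMap K L (x i), by
        rw [← map_mul, ← sq, hx, ← IsScalarTower.algebraMap_apply]⟩ y

open QF in
/-- Aravire–Laghribi, separability degree 2 case.
Let `F` have characteristic 2, `K = F(√a₁,…,√aₙ)` with `aᵢ ∈ F*`, and
`L = K(℘⁻¹(b))` for some `b ∈ F`, where `℘⁻¹(b)` is a root of `X² + X + b`.  Then
`W_q(L/F) = W(F) ⊗ [1,b] + Σᵢ ⟨1,aᵢ⟩_b ⊗ W_q(F)`: a nonsingular quadratic form `q`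
over `F` becomes hyperbolic over `L` iff `q` is Witt equivalent to
`(⊥ⱼ cⱼ·[1,b]) ⊥ (⊥ᵢ ⟨1,aᵢ⟩_b ⊗ τᵢ)` with `cⱼ ∈ F*` and `τᵢ` nonsingular over `F`. -/
theorem wittKernel_multiquadratic_sep_degree_two
    (F K L : Type*) [Field F] [Field K] [Field L] [Algebra F K] [Algebra K L]
    [Algebra F L] [IsScalarTower F K L] [CharP F 2]
    (n : ℕ) (a : Fin n → F) (ha : ∀ i, a i ≠ 0)
    (x : Fin n → K) (hx : ∀ i, x i ^ 2 = algebraMap F K (a i))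
    (hgenK : Algebra.adjoin F (Set.range x) = ⊤)
    (b : F) (β : L) (hβ : β ^ 2 + β + algebraMap F L b = 0)
    (hgenL : Algebra.adjoin K {β} = ⊤) :
    ∀ q : QF F, q.Nonsingular →
      (Hyperbolic (q.map (algebraMap F L)) ↔
        ∃ (bs : List F) (τ : Fin n → QF F), (∀ c ∈ bs, c ≠ 0) ∧
          (∀ i, (τ i).Nonsingular) ∧
          WittEquiv q ((sumList (bs.map fun c => smul c (bin 1 b))).orthSum
            (sumList (List.ofFn fun i => (τ i).orthSum (smul (a i) (τ i)))))) := by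
  intro q hq
  have : CharP L 2 := charP_of_injective_algebraMap (algebraMap F L).injective 2
  lift a to Fin n → Fˣ using fun i => (ha i).isUnit
  rw [hyperbolic_map_iff_wittClass_mem_ker hq,
    wittKernel_multiquadratic_sep_degree_two_general hx hgenK hβ hgenL]
  exact wittClass_mem_closure_sup_iSup_iff hq
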